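/- arXiv:1705.07039 — 11 statements merged into one kernel-verified Lean document; each statement's English description precedes it below -/
import Mathlib

section
/- Let p be a nonzero real number. The metric α_p on X∖{0} is consistent with the norm metric α_1[x,y] = ‖x − y‖: for every sequence (x_n) in X∖{0} and every x ∈ X∖{0}, ‖x_n − x‖ → 0 as n → ∞ if and only if α_p[x_n, x] → 0 as n → ∞. -/
/-- The `p`-angular distance `α_p[x,y] = ‖‖x‖^(p-1) • x - ‖y‖^(p-1) • y‖`. -/
noncomputable def alphaD {X : Type*} [NormedAddCommGroup X] [NormedSpace ℝ X]
    (p : ℝ) (x y : X) : ℝ :=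
  ‖(‖x‖ ^ (p - 1)) • x - (‖y‖ ^ (p - 1)) • y‖

/-! The distance `α_p` is the norm metric pulled back along the radial power map
`x ↦ ‖x‖ ^ (p - 1) • x`. Radial power maps are continuous away from the origin and compose by
multiplying exponents, so for `p ≠ 0` this map is a homeomorphism of `X ∖ {0}`, whose inverse is the
radial power map with exponent `p⁻¹`. -/

open Filter
open scoped Topology

section RadialPow

variable {X : Type*} [NormedAddCommGroup X] [NormedSpace ℝ X]

/-- The radial power map, which keeps the direction of a nonzero vector and raises its norm to the
power `p`. It sends `0` to `0` for every exponent, including the negative ones. -/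
noncomputable def radialPow (p : ℝ) (x : X) : X :=
  ‖x‖ ^ (p - 1) • x

theorem alphaD_eq_norm_radialPow_sub (p : ℝ) (x y : X) :
    alphaD p x y = ‖radialPow p x - radialPow p y‖ :=
  rfl

theorem radialPow_one (x : X) : radialPow 1 x = x := by
  simp [radialPow]

theorem radialPow_ne_zero (p : ℝ) {x : X} (hx : x ≠ 0) : radialPow p x ≠ 0 :=
  smul_ne_zero (Real.rpow_pos_of_pos (norm_pos_iff.2 hx) _).ne' hx

theorem norm_radialPow (p : ℝ) {x : X} (hx : x ≠ 0) : ‖radialPow p x‖ = ‖x‖ ^ p := by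
  have hnorm : 0 < ‖x‖ := norm_pos_iff.2 hx
  rw [radialPow, norm_smul, Real.norm_of_nonneg (Real.rpow_nonneg hnorm.le _),
    Real.rpow_sub_one hnorm.ne', div_mul_cancel₀ _ hnorm.ne']

theorem radialPow_radialPow (p q : ℝ) {x : X} (hx : x ≠ 0) :
    radialPow q (radialPow p x) = radialPow (p * q) x := by
  have hnorm : 0 < ‖x‖ := norm_pos_iff.2 hx
  calc
    radialPow q (radialPow p x) = (‖x‖ ^ p) ^ (q - 1) • ‖x‖ ^ (p - 1) • x := by
      rw [radialPow, norm_radialPow p hx, radialPow]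
    _ = ‖x‖ ^ (p * (q - 1) + (p - 1)) • x := by
      rw [smul_smul, ← Real.rpow_mul hnorm.le, ← Real.rpow_add hnorm]
    _ = radialPow (p * q) x := by
      rw [radialPow]
      ring_nf

theorem radialPow_inv_radialPow {p : ℝ} (hp : p ≠ 0) {x : X} (hx : x ≠ 0) :
    radialPow p⁻¹ (radialPow p x) = x := by
  rw [radialPow_radialPow p p⁻¹ hx, mul_inv_cancel₀ hp, radialPow_one]

theorem continuousAt_radialPow (p : ℝ) {x : X} (hx : x ≠ 0) : ContinuousAt (radialPow p) x :=
  (continuousAt_id.norm.rpow_const (Or.inl (norm_ne_zero_iff.2 hx))).smul continuousAt_id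

theorem tendsto_radialPow_iff {ι : Type*} {l : Filter ι} {p : ℝ} (hp : p ≠ 0) {u : ι → X}
    (hu : ∀ᶠ i in l, u i ≠ 0) {x : X} (hx : x ≠ 0) :
    Tendsto (fun i ↦ radialPow p (u i)) l (𝓝 (radialPow p x)) ↔ Tendsto u l (𝓝 x) := by
  refine ⟨fun h ↦ ?_, (continuousAt_radialPow p hx).tendsto.comp⟩
  have hinv : Tendsto (fun i ↦ radialPow p⁻¹ (radialPow p (u i))) l
      (𝓝 (radialPow p⁻¹ (radialPow p x))) :=
    (continuousAt_radialPow p⁻¹ (radialPow_ne_zero p hx)).tendsto.comp h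
  rw [radialPow_inv_radialPow hp hx] at hinv
  exact hinv.congr' (hu.mono fun _ ↦ radialPow_inv_radialPow hp)

end RadialPow

theorem stmt_1_general {X ι : Type*} [NormedAddCommGroup X] [NormedSpace ℝ X]
    {l : Filter ι} {p : ℝ} (hp : p ≠ 0) {u : ι → X} (hu : ∀ᶠ i in l, u i ≠ 0)
    {x : X} (hx : x ≠ 0) :
    Tendsto (fun i ↦ ‖u i - x‖) l (𝓝 0) ↔ Tendsto (fun i ↦ alphaD p (u i) x) l (𝓝 0) := by
  simp only [alphaD_eq_norm_radialPow_sub]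
  rw [← tendsto_iff_norm_sub_tendsto_zero, ← tendsto_iff_norm_sub_tendsto_zero]
  exact (tendsto_radialPow_iff hp hu hx).symm

theorem stmt_1 {X : Type*} [NormedAddCommGroup X] [NormedSpace ℝ X]
    (p : ℝ) (hp : p ≠ 0) (u : ℕ → X) (hu : ∀ n, u n ≠ 0) (x : X) (hx : x ≠ 0) :
    Filter.Tendsto (fun n => ‖u n - x‖) Filter.atTop (nhds 0) ↔
      Filter.Tendsto (fun n => alphaD p (u n) x) Filter.atTop (nhds 0) :=
  stmt_1_general hp (Eventually.of_forall hu) hx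
end

section
/- Let X be a nonzero real normed linear space and let p, q be distinct nonzero real numbers. Then α_p is not equivalent to α_q: there is no constant M > 0 such that α_p[x,y] ≤ M·α_q[x,y] for all nonzero x, y ∈ X. -/
theorem alphaD_self_neg {X : Type*} [NormedAddCommGroup X] [NormedSpace ℝ X]
    (p : ℝ) {x : X} (hx : x ≠ 0) : alphaD p x (-x) = 2 * ‖x‖ ^ p := by
  have hnorm : ‖x‖ ≠ 0 := norm_ne_zero_iff.mpr hx
  calc
    alphaD p x (-x) = ‖(2 * ‖x‖ ^ (p - 1)) • x‖ := by
      rw [alphaD, norm_neg, smul_neg, sub_neg_eq_add, ← add_smul, two_mul]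
    _ = 2 * (‖x‖ ^ (p - 1) * ‖x‖) := by
      rw [norm_smul, Real.norm_of_nonneg (by positivity), mul_assoc]
    _ = 2 * ‖x‖ ^ p := by
      rw [Real.rpow_sub_one hnorm, div_mul_cancel₀ _ hnorm]

theorem exists_pos_lt_rpow {s : ℝ} (hs : s ≠ 0) (M : ℝ) : ∃ r > (0 : ℝ), M < r ^ s := by
  refine ⟨(|M| + 1) ^ s⁻¹, by positivity, ?_⟩
  rw [Real.rpow_inv_rpow (by positivity) hs]
  exact (le_abs_self M).trans_lt (lt_add_one _)

theorem exists_pos_mul_rpow_lt_rpow {p q : ℝ} (hpq : p ≠ q) (M : ℝ) :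
    ∃ r > (0 : ℝ), M * r ^ q < r ^ p := by
  obtain ⟨r, hr, hM⟩ := exists_pos_lt_rpow (sub_ne_zero.mpr hpq) M
  refine ⟨r, hr, ?_⟩
  rwa [Real.rpow_sub hr, lt_div_iff₀ (Real.rpow_pos_of_pos hr q)] at hM

theorem stmt_2_general {X : Type*} [NormedAddCommGroup X] [NormedSpace ℝ X] [Nontrivial X]
    {p q : ℝ} (hpq : p ≠ q) (M : ℝ) :
    ∃ x : X, x ≠ 0 ∧ M * alphaD q x (-x) < alphaD p x (-x) := by
  obtain ⟨r, hr, hlt⟩ := exists_pos_mul_rpow_lt_rpow hpq M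
  obtain ⟨x, rfl⟩ := exists_norm_eq X hr.le
  have hx : x ≠ 0 := norm_pos_iff.mp hr
  refine ⟨x, hx, ?_⟩
  rw [alphaD_self_neg q hx, alphaD_self_neg p hx]
  linarith

theorem stmt_2 {X : Type*} [NormedAddCommGroup X] [NormedSpace ℝ X] [Nontrivial X]
    (p q : ℝ) (hp : p ≠ 0) (hq : q ≠ 0) (hpq : p ≠ q) :
    ¬ ∃ M > (0 : ℝ), ∀ x y : X, x ≠ 0 → y ≠ 0 → alphaD p x y ≤ M * alphaD q x y := by
  rintro ⟨M, -, hle⟩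
  obtain ⟨x, hx, hlt⟩ := stmt_2_general (X := X) hpq M
  exact (hle x (-x) hx (neg_ne_zero.mpr hx)).not_gt hlt
end

section
/- Let X be a nonzero real normed linear space and let p be a real number with p ≠ 1. Then the skew p-angular distance β_p is not a metric on X∖{0}: there exist nonzero x, y, z ∈ X with β_p[x,y] > β_p[x,z] + β_p[y,z]. -/
/-- The skew `p`-angular distance `β_p[x,y] = ‖‖y‖^(p-1) • x - ‖x‖^(p-1) • y‖`. -/
noncomputable def betaD {X : Type*} [NormedAddCommGroup X] [NormedSpace ℝ X]
    (p : ℝ) (x y : X) : ℝ :=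
  ‖(‖y‖ ^ (p - 1)) • x - (‖x‖ ^ (p - 1)) • y‖

/-! The triangle inequality fails next to the origin, where `‖y‖ ^ (p - 1)` tends to `0` or to `∞`.
If `p > 1`, then `β_p[x, z] → 0` as `z → 0`, so a small `z` is a shortcut between any `x` and `y`
with `β_p[x, y] > 0`. If `p < 1` and `‖z‖ < ‖x‖`, then `β_p[x, y] - β_p[y, z]` grows at least like
`‖y‖ ^ (p - 1) * (‖x‖ - ‖z‖) → ∞` as `y → 0`, and so eventually exceeds `β_p[x, z]`. -/

open Filter Topology

section SkewAngularDistance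

variable {X : Type*} [NormedAddCommGroup X] [NormedSpace ℝ X] {p : ℝ}

lemma norm_norm_rpow_smul (r : ℝ) (x y : X) : ‖‖x‖ ^ r • y‖ = ‖x‖ ^ r * ‖y‖ :=
  norm_smul_of_nonneg (by positivity) y

lemma betaD_le_add (p : ℝ) (x y : X) :
    betaD p x y ≤ ‖y‖ ^ (p - 1) * ‖x‖ + ‖x‖ ^ (p - 1) * ‖y‖ := by
  simpa only [betaD, norm_norm_rpow_smul] using
    norm_sub_le (‖y‖ ^ (p - 1) • x) (‖x‖ ^ (p - 1) • y)

lemma sub_le_betaD (p : ℝ) (x y : X) :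
    ‖y‖ ^ (p - 1) * ‖x‖ - ‖x‖ ^ (p - 1) * ‖y‖ ≤ betaD p x y := by
  simpa only [betaD, norm_norm_rpow_smul] using
    norm_sub_norm_le (‖y‖ ^ (p - 1) • x) (‖x‖ ^ (p - 1) • y)

lemma betaD_self_neg (p : ℝ) (x : X) : betaD p x (-x) = 2 * (‖x‖ ^ (p - 1) * ‖x‖) := by
  rw [betaD, norm_neg, smul_neg, sub_neg_eq_add, ← two_smul ℝ, norm_smul, norm_norm_rpow_smul,
    Real.norm_two]

lemma betaD_self_neg_pos (p : ℝ) {x : X} (hx : x ≠ 0) : 0 < betaD p x (-x) := by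
  rw [betaD_self_neg]
  positivity

lemma tendsto_betaD_nhds_zero (hp : 1 < p) (x : X) : Tendsto (betaD p x) (𝓝 0) (𝓝 0) := by
  have hrpow : Tendsto (fun z : X ↦ ‖z‖ ^ (p - 1)) (𝓝 0) (𝓝 0) := by
    simpa only [Real.zero_rpow (sub_pos.2 hp).ne'] using
      tendsto_norm_zero.rpow_const (.inr (sub_pos.2 hp).le)
  have hbound : Tendsto (fun z : X ↦ ‖z‖ ^ (p - 1) * ‖x‖ + ‖x‖ ^ (p - 1) * ‖z‖) (𝓝 0) (𝓝 0) := by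
    simpa only [zero_mul, mul_zero, add_zero] using
      (hrpow.mul_const ‖x‖).add (tendsto_norm_zero.const_mul (‖x‖ ^ (p - 1)))
  exact squeeze_zero (fun _ ↦ norm_nonneg _) (betaD_le_add p x) hbound

lemma tendsto_betaD_sub_betaD_atTop (hp : p < 1) {x z : X} (hzx : ‖z‖ < ‖x‖) :
    Tendsto (fun y ↦ betaD p x y - betaD p y z) (𝓝[≠] 0) atTop := by
  have hrpow : Tendsto (fun y : X ↦ ‖y‖ ^ (p - 1)) (𝓝[≠] 0) atTop :=
    (tendsto_rpow_neg_nhdsGT_zero (sub_neg.2 hp)).comp tendsto_norm_nhdsNE_zero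
  have hnorm : Tendsto (fun y : X ↦ -(‖x‖ ^ (p - 1) + ‖z‖ ^ (p - 1)) * ‖y‖) (𝓝[≠] 0) (𝓝 0) := by
    simpa only [mul_zero] using
      (tendsto_norm_zero.mono_left nhdsWithin_le_nhds).const_mul (-(‖x‖ ^ (p - 1) + ‖z‖ ^ (p - 1)))
  refine tendsto_atTop_mono (fun y ↦ ?_)
    ((hrpow.atTop_mul_const (sub_pos.2 hzx)).atTop_add hnorm)
  linarith [sub_le_betaD p x y, betaD_le_add p y z]

end SkewAngularDistance

theorem stmt_3 {X : Type*} [NormedAddCommGroup X] [NormedSpace ℝ X] [Nontrivial X]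
    (p : ℝ) (hp : p ≠ 1) :
    ∃ x y z : X, x ≠ 0 ∧ y ≠ 0 ∧ z ≠ 0 ∧
      betaD p x z + betaD p y z < betaD p x y := by
  have : (𝓝[≠] (0 : X)).NeBot := Module.punctured_nhds_neBot ℝ X 0
  obtain ⟨v, hv⟩ := exists_ne (0 : X)
  rcases hp.lt_or_gt with hp | hp
  · have hnorm : ‖v‖ < ‖(2 : ℝ) • v‖ := by
      rw [norm_smul, Real.norm_two]
      linarith [norm_pos_iff.2 hv]
    obtain ⟨y, hlt, hy⟩ := (((tendsto_betaD_sub_betaD_atTop hp hnorm).eventually_gt_atTop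
      (betaD p ((2 : ℝ) • v) v)).and eventually_mem_nhdsWithin).exists
    exact ⟨(2 : ℝ) • v, y, v, smul_ne_zero two_ne_zero hv, hy, hv, lt_sub_iff_add_lt.1 hlt⟩
  · have hsum : Tendsto (fun z ↦ betaD p v z + betaD p (-v) z) (𝓝[≠] 0) (𝓝 0) := by
      simpa only [add_zero] using ((tendsto_betaD_nhds_zero hp v).add
        (tendsto_betaD_nhds_zero hp (-v))).mono_left nhdsWithin_le_nhds
    obtain ⟨z, hlt, hz⟩ := ((hsum.eventually_lt_const (betaD_self_neg_pos p hv)).and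
      eventually_mem_nhdsWithin).exists
    exact ⟨v, -v, z, hv, neg_ne_zero.2 hv, hz, hlt⟩
end

section
/- Let p be a positive real number and let A be a nonempty subset of X∖{0} that is complete with respect to the metric α_p (every sequence in A that is Cauchy with respect to α_p converges, with respect to α_p, to an element of A). Then A is norm-bounded from below: there exists c > 0 such that ‖a‖ ≥ c for all a ∈ A. Dually, if p < 0 and A is α_p-complete, then A is norm-bounded from above: there exists C > 0 such that ‖a‖ ≤ C for all a ∈ A. -/
/-- A set `A` is complete with respect to the metric `α_p`: every sequence in `A`
that is Cauchy with respect to `α_p` converges, with respect to `α_p`, to a point of `A`. -/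
def AlphaComplete {X : Type*} [NormedAddCommGroup X] [NormedSpace ℝ X]
    (p : ℝ) (A : Set X) : Prop :=
  ∀ u : ℕ → X, (∀ n, u n ∈ A) →
    (∀ ε > (0 : ℝ), ∃ N : ℕ, ∀ m ≥ N, ∀ n ≥ N, alphaD p (u m) (u n) < ε) →
    ∃ a ∈ A, Filter.Tendsto (fun n => alphaD p (u n) a) Filter.atTop (nhds 0)

/-!
The map `φ x = ‖x‖ ^ (p - 1) • x` turns `α_p` into the norm distance, so `α_p`-completeness of `A`
makes `φ '' A` complete, hence closed, in `X`. Since `0 ∉ A`, also `0 ∉ φ '' A`, so `φ '' A` stays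
away from `0`. As `‖φ a‖ = ‖a‖ ^ p`, this bounds `‖a‖ ^ p` below by a positive constant, which
bounds `‖a‖` from below or from above according to the sign of `p`.
-/

/-- The radial map whose norm distance is the `p`-angular distance. It sends `0` to `0` for
every `p`. -/
noncomputable def alphaMap {X : Type*} [NormedAddCommGroup X] [NormedSpace ℝ X] (p : ℝ) (x : X) :
    X :=
  ‖x‖ ^ (p - 1) • x

section AlphaMap

variable {X : Type*} [NormedAddCommGroup X] [NormedSpace ℝ X] {p : ℝ} {x : X} {A : Set X}

theorem dist_alphaMap (p : ℝ) (x y : X) : dist (alphaMap p x) (alphaMap p y) = alphaD p x y :=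
  dist_eq_norm _ _

theorem norm_alphaMap (p : ℝ) (hx : x ≠ 0) : ‖alphaMap p x‖ = ‖x‖ ^ p := by
  have hx' : ‖x‖ ≠ 0 := norm_ne_zero_iff.mpr hx
  rw [alphaMap, norm_smul, Real.norm_of_nonneg (by positivity), Real.rpow_sub_one hx',
    div_mul_cancel₀ _ hx']

theorem alphaMap_ne_zero (p : ℝ) (hx : x ≠ 0) : alphaMap p x ≠ 0 :=
  smul_ne_zero (Real.rpow_pos_of_pos (norm_pos_iff.mpr hx) _).ne' hx

theorem AlphaComplete.isComplete_image (hA : AlphaComplete p A) :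
    IsComplete (alphaMap p '' A) := by
  rw [← completeSpace_coe_iff_isComplete]
  refine Metric.complete_of_cauchySeq_tendsto fun v hv => ?_
  choose u huA huv using fun n => (v n).2
  have hdist (m n : ℕ) : alphaD p (u m) (u n) = dist (v m) (v n) := by
    rw [← dist_alphaMap, huv, huv, Subtype.dist_eq]
  obtain ⟨a, haA, ha⟩ := hA u huA (by simpa only [hdist] using Metric.cauchySeq_iff.mp hv)
  refine ⟨⟨alphaMap p a, a, haA, rfl⟩, tendsto_iff_dist_tendsto_zero.mpr ?_⟩
  simpa only [← dist_alphaMap, huv, Subtype.dist_eq] using ha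

theorem AlphaComplete.exists_pos_le_norm_rpow (hA : AlphaComplete p A) (hA0 : ∀ a ∈ A, a ≠ 0) :
    ∃ r > 0, ∀ a ∈ A, r ≤ ‖a‖ ^ p := by
  have h0 : (0 : X) ∉ alphaMap p '' A := by
    rintro ⟨a, ha, h⟩
    exact alphaMap_ne_zero p (hA0 a ha) h
  obtain ⟨r, hr, hball⟩ := Metric.isOpen_iff.mp hA.isComplete_image.isClosed.isOpen_compl 0 h0
  refine ⟨r, hr, fun a ha => ?_⟩
  have hfar : r ≤ ‖alphaMap p a‖ := by
    by_contra! hlt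
    exact hball (mem_ball_zero_iff.mpr hlt) (Set.mem_image_of_mem _ ha)
  rwa [norm_alphaMap p (hA0 a ha)] at hfar

end AlphaMap

theorem stmt_4 {X : Type*} [NormedAddCommGroup X] [NormedSpace ℝ X]
    (p : ℝ) (A : Set X) (hA : A.Nonempty) (hA0 : ∀ a ∈ A, a ≠ 0)
    (hcomp : AlphaComplete p A) :
    (0 < p → ∃ c > (0 : ℝ), ∀ a ∈ A, c ≤ ‖a‖) ∧
    (p < 0 → ∃ C > (0 : ℝ), ∀ a ∈ A, ‖a‖ ≤ C) := by
  obtain ⟨r, hr, hle⟩ := hcomp.exists_pos_le_norm_rpow hA0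
  have hpos : 0 < r ^ p⁻¹ := Real.rpow_pos_of_pos hr _
  refine ⟨fun hp => ⟨r ^ p⁻¹, hpos, fun a ha => ?_⟩, fun hp => ⟨r ^ p⁻¹, hpos, fun a ha => ?_⟩⟩
  · exact (Real.rpow_inv_le_iff_of_pos hr.le (norm_nonneg a) hp).mpr (hle a ha)
  · exact (Real.le_rpow_inv_iff_of_neg (norm_pos_iff.mpr (hA0 a ha)) hr hp).mpr (hle a ha)
end

section
/- Let p, q be real numbers with q ≠ 0. Then for all nonzero x, y ∈ X, (|p|/(|p| + |p − q|)) · min(‖x‖^(p−q), ‖y‖^(p−q)) · α_q[x,y] ≤ α_p[x,y] ≤ ((|q| + |p − q|)/|q|) · max(‖x‖^(p−q), ‖y‖^(p−q)) · α_q[x,y]. -/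
/-!
Write `f_p x = ‖x‖ ^ (p - 1) • x`, a vector of norm `‖x‖ ^ p`, so that `α_p[x,y] = ‖f_p x - f_p y‖`.
Since `f_p x = ‖x‖ ^ (p - q) • f_q x`, the triangle inequality bounds `α_p` by
`max (‖x‖ ^ (p - q)) (‖y‖ ^ (p - q)) * α_q` plus an error
`|‖x‖ ^ (p - q) - ‖y‖ ^ (p - q)| * min (‖x‖ ^ q) (‖y‖ ^ q)`. As the logarithmic mean lies between
`min` and `max`, both `|a ^ r - b ^ r|` and `|a ^ q - b ^ q|` are comparable to multiples of
`|log a - log b|`, and the error is absorbed by `|‖x‖ ^ q - ‖y‖ ^ q| ≤ α_q[x,y]`. The lower bound is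
the upper bound with `p` and `q` exchanged.
-/

section LogarithmicMean

variable {a b : ℝ}

theorem mul_log_sub_log_le_sub (ha : 0 < a) (hb : 0 < b) :
    b * (Real.log a - Real.log b) ≤ a - b := by
  calc b * (Real.log a - Real.log b) = b * Real.log (a / b) := by
        rw [Real.log_div ha.ne' hb.ne']
    _ ≤ b * (a / b - 1) := by gcongr; exact Real.log_le_sub_one_of_pos (div_pos ha hb)
    _ = a - b := by field_simp

theorem min_mul_abs_log_sub_log_le_abs_sub (ha : 0 < a) (hb : 0 < b) :
    min a b * |Real.log a - Real.log b| ≤ |a - b| := by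
  wlog hba : b ≤ a generalizing a b
  · rw [min_comm, abs_sub_comm, abs_sub_comm a]
    exact this hb ha (le_of_not_ge hba)
  rw [min_eq_right hba, abs_of_nonneg (sub_nonneg.2 (Real.log_le_log hb hba)),
    abs_of_nonneg (sub_nonneg.2 hba)]
  exact mul_log_sub_log_le_sub ha hb

theorem abs_sub_le_max_mul_abs_log_sub_log (ha : 0 < a) (hb : 0 < b) :
    |a - b| ≤ max a b * |Real.log a - Real.log b| := by
  wlog hba : b ≤ a generalizing a b
  · rw [max_comm, abs_sub_comm, abs_sub_comm (Real.log a)]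
    exact this hb ha (le_of_not_ge hba)
  rw [max_eq_left hba, abs_of_nonneg (sub_nonneg.2 (Real.log_le_log hb hba)),
    abs_of_nonneg (sub_nonneg.2 hba)]
  linarith [mul_log_sub_log_le_sub hb ha]

theorem abs_mul_min_rpow_mul_abs_log_sub_log_le (ha : 0 < a) (hb : 0 < b) (r : ℝ) :
    |r| * min (a ^ r) (b ^ r) * |Real.log a - Real.log b| ≤ |a ^ r - b ^ r| := by
  have h := min_mul_abs_log_sub_log_le_abs_sub (Real.rpow_pos_of_pos ha r)
    (Real.rpow_pos_of_pos hb r)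
  rw [Real.log_rpow ha, Real.log_rpow hb, ← mul_sub, abs_mul] at h
  linarith

theorem abs_rpow_sub_rpow_le_abs_mul_max_mul (ha : 0 < a) (hb : 0 < b) (r : ℝ) :
    |a ^ r - b ^ r| ≤ |r| * max (a ^ r) (b ^ r) * |Real.log a - Real.log b| := by
  have h := abs_sub_le_max_mul_abs_log_sub_log (Real.rpow_pos_of_pos ha r)
    (Real.rpow_pos_of_pos hb r)
  rw [Real.log_rpow ha, Real.log_rpow hb, ← mul_sub, abs_mul] at h
  linarith

theorem abs_mul_abs_rpow_sub_rpow_mul_min_le (ha : 0 < a) (hb : 0 < b) (r q : ℝ) :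
    |q| * (|a ^ r - b ^ r| * min (a ^ q) (b ^ q)) ≤
      |r| * max (a ^ r) (b ^ r) * |a ^ q - b ^ q| := by
  calc |q| * (|a ^ r - b ^ r| * min (a ^ q) (b ^ q))
      ≤ |q| * (|r| * max (a ^ r) (b ^ r) * |Real.log a - Real.log b| * min (a ^ q) (b ^ q)) := by
        gcongr
        exact abs_rpow_sub_rpow_le_abs_mul_max_mul ha hb r
    _ = |r| * max (a ^ r) (b ^ r) *
          (|q| * min (a ^ q) (b ^ q) * |Real.log a - Real.log b|) := by ring
    _ ≤ |r| * max (a ^ r) (b ^ r) * |a ^ q - b ^ q| := by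
        gcongr
        exact abs_mul_min_rpow_mul_abs_log_sub_log_le ha hb q

theorem max_rpow_neg (ha : 0 < a) (hb : 0 < b) (r : ℝ) :
    max (a ^ (-r)) (b ^ (-r)) = (min (a ^ r) (b ^ r))⁻¹ := by
  rw [Real.rpow_neg ha.le, Real.rpow_neg hb.le]
  exact (inv_antitoneOn_Ioi.map_min (Real.rpow_pos_of_pos ha r) (Real.rpow_pos_of_pos hb r)).symm

end LogarithmicMean

theorem norm_smul_sub_smul_le_max_mul_add {R E : Type*} [SeminormedRing R]
    [SeminormedAddCommGroup E] [Module R E] [IsBoundedSMul R E] (r s : R) (u v : E) :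
    ‖r • u - s • v‖ ≤ max ‖r‖ ‖s‖ * ‖u - v‖ + ‖r - s‖ * min ‖u‖ ‖v‖ := by
  wlog hvu : ‖v‖ ≤ ‖u‖ generalizing r s u v
  · rw [norm_sub_rev, max_comm, min_comm, norm_sub_rev u, norm_sub_rev r]
    exact this s r v u (le_of_not_ge hvu)
  rw [min_eq_right hvu]
  calc ‖r • u - s • v‖ = ‖r • (u - v) + (r - s) • v‖ := by
        rw [smul_sub, sub_smul, sub_add_sub_cancel]
    _ ≤ ‖r‖ * ‖u - v‖ + ‖r - s‖ * ‖v‖ := norm_add_le_of_le (norm_smul_le _ _) (norm_smul_le _ _)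
    _ ≤ max ‖r‖ ‖s‖ * ‖u - v‖ + ‖r - s‖ * ‖v‖ := by gcongr; exact le_max_left _ _

section RadialPower

variable {E : Type*} [SeminormedAddCommGroup E] [NormedSpace ℝ E]

/-- The radial power map `x ↦ ‖x‖ ^ (p - 1) • x`, which keeps the direction of `x` and raises its
norm to the power `p`; the `p`-angular distance is the distance between radial powers. -/
noncomputable def radialPower (p : ℝ) (x : E) : E :=
  ‖x‖ ^ (p - 1) • x

theorem norm_radialPower (p : ℝ) {x : E} (hx : ‖x‖ ≠ 0) : ‖radialPower p x‖ = ‖x‖ ^ p := by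
  rw [radialPower, norm_smul, Real.norm_of_nonneg (by positivity), Real.rpow_sub_one hx,
    div_mul_cancel₀ _ hx]

theorem radialPower_eq_rpow_smul (p q : ℝ) {x : E} (hx : ‖x‖ ≠ 0) :
    radialPower p x = ‖x‖ ^ (p - q) • radialPower q x := by
  rw [radialPower, radialPower, smul_smul, ← Real.rpow_add (by positivity), sub_add_sub_cancel]

end RadialPower

section AngularDistance

variable {X : Type*} [NormedAddCommGroup X] [NormedSpace ℝ X] {x y : X}

theorem alphaD_eq_norm_radialPower_sub (p : ℝ) (x y : X) :
    alphaD p x y = ‖radialPower p x - radialPower p y‖ := rfl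

theorem alphaD_nonneg (p : ℝ) (x y : X) : 0 ≤ alphaD p x y :=
  norm_nonneg _

theorem abs_norm_rpow_sub_norm_rpow_le_alphaD (p : ℝ) (hx : x ≠ 0) (hy : y ≠ 0) :
    |‖x‖ ^ p - ‖y‖ ^ p| ≤ alphaD p x y := by
  rw [← norm_radialPower p (norm_ne_zero_iff.2 hx), ← norm_radialPower p (norm_ne_zero_iff.2 hy),
    alphaD_eq_norm_radialPower_sub]
  exact abs_norm_sub_norm_le _ _

theorem alphaD_le_max_mul_alphaD_add (p q : ℝ) (hx : x ≠ 0) (hy : y ≠ 0) :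
    alphaD p x y ≤ max (‖x‖ ^ (p - q)) (‖y‖ ^ (p - q)) * alphaD q x y +
      |‖x‖ ^ (p - q) - ‖y‖ ^ (p - q)| * min (‖x‖ ^ q) (‖y‖ ^ q) := by
  have hx' := norm_ne_zero_iff.2 hx
  have hy' := norm_ne_zero_iff.2 hy
  have h := norm_smul_sub_smul_le_max_mul_add (‖x‖ ^ (p - q)) (‖y‖ ^ (p - q))
    (radialPower q x) (radialPower q y)
  rwa [← radialPower_eq_rpow_smul p q hx', ← radialPower_eq_rpow_smul p q hy',
    ← alphaD_eq_norm_radialPower_sub, ← alphaD_eq_norm_radialPower_sub,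
    norm_radialPower q hx', norm_radialPower q hy', Real.norm_of_nonneg (by positivity),
    Real.norm_of_nonneg (by positivity), Real.norm_eq_abs] at h

theorem alphaD_le_mul_max_mul_alphaD (p : ℝ) {q : ℝ} (hq : q ≠ 0) (hx : x ≠ 0) (hy : y ≠ 0) :
    alphaD p x y ≤
      ((|q| + |p - q|) / |q|) * max (‖x‖ ^ (p - q)) (‖y‖ ^ (p - q)) * alphaD q x y := by
  set M := max (‖x‖ ^ (p - q)) (‖y‖ ^ (p - q))
  set error := |‖x‖ ^ (p - q) - ‖y‖ ^ (p - q)| * min (‖x‖ ^ q) (‖y‖ ^ q)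
  have hq' : 0 < |q| := abs_pos.2 hq
  have error_le : |q| * error ≤ |p - q| * M * alphaD q x y := by
    refine (abs_mul_abs_rpow_sub_rpow_mul_min_le (norm_pos_iff.2 hx) (norm_pos_iff.2 hy)
      (p - q) q).trans ?_
    gcongr
    exact abs_norm_rpow_sub_norm_rpow_le_alphaD q hx hy
  calc alphaD p x y ≤ M * alphaD q x y + error := alphaD_le_max_mul_alphaD_add p q hx hy
    _ ≤ M * alphaD q x y + |p - q| * M * alphaD q x y / |q| := by
        gcongr
        rwa [le_div_iff₀' hq']
    _ = ((|q| + |p - q|) / |q|) * M * alphaD q x y := by field_simp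

theorem mul_min_mul_alphaD_le_alphaD (p q : ℝ) (hx : x ≠ 0) (hy : y ≠ 0) :
    (|p| / (|p| + |p - q|)) * min (‖x‖ ^ (p - q)) (‖y‖ ^ (p - q)) * alphaD q x y ≤
      alphaD p x y := by
  rcases eq_or_ne p 0 with rfl | hp
  · simpa using alphaD_nonneg 0 x y
  have hx' : 0 < ‖x‖ := norm_pos_iff.2 hx
  have hy' : 0 < ‖y‖ := norm_pos_iff.2 hy
  have hswap := alphaD_le_mul_max_mul_alphaD q hp hx hy
  rw [abs_sub_comm q p, ← neg_sub p q, max_rpow_neg hx' hy'] at hswap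
  set m := min (‖x‖ ^ (p - q)) (‖y‖ ^ (p - q))
  have hm : 0 < m := lt_min (by positivity) (by positivity)
  calc |p| / (|p| + |p - q|) * m * alphaD q x y
      ≤ |p| / (|p| + |p - q|) * m * ((|p| + |p - q|) / |p| * m⁻¹ * alphaD p x y) := by gcongr
    _ = alphaD p x y := by field_simp

end AngularDistance

theorem stmt_5 {X : Type*} [NormedAddCommGroup X] [NormedSpace ℝ X]
    (p q : ℝ) (hq : q ≠ 0) (x y : X) (hx : x ≠ 0) (hy : y ≠ 0) :
    (|p| / (|p| + |p - q|)) * min (‖x‖ ^ (p - q)) (‖y‖ ^ (p - q)) * alphaD q x y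
      ≤ alphaD p x y ∧
    alphaD p x y ≤
      ((|q| + |p - q|) / |q|) * max (‖x‖ ^ (p - q)) (‖y‖ ^ (p - q)) * alphaD q x y :=
  ⟨mul_min_mul_alphaD_le_alphaD p q hx hy, alphaD_le_mul_max_mul_alphaD p hq hx hy⟩
end

section
/- Let X be a nonzero real normed linear space and let p, q be real numbers with p > 0 and q < 0. Then there exist nonempty subsets A, B of X∖{0} such that A is complete with respect to the metric α_p but not complete with respect to α_q, and B is complete with respect to α_q but not complete with respect to α_p. -/
/-!
With `φ_r x = ‖x‖ ^ (r - 1) • x`, the distance `α_r[x, y]` is the norm distance between `φ_r x` and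
`φ_r y`, so a set is `α_r`-complete iff its image under `φ_r` is complete in the norm. On an open
half-line `φ_r` acts by `s • e ↦ s ^ r • φ_r e`, so for `r > 0` it maps each of `{s • e | 1 ≤ s}`
and `{s • e | 0 < s ≤ 1}` to a set of the same shape, while for `r < 0` it interchanges the two
shapes. The first shape is complete; the second is not, as it lacks its limit point `0`.
-/

open Set
open scoped Pointwise

section SMulLeft

variable {𝕜 E : Type*} [NormedField 𝕜] [SeminormedAddCommGroup E] [NormedSpace 𝕜 E]

theorem isUniformInducing_smul_left {v : E} (hv : ‖v‖ ≠ 0) :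
    IsUniformInducing fun s : 𝕜 ↦ s • v :=
  have antilipschitz : AntilipschitzWith ‖v‖₊⁻¹ fun s : 𝕜 ↦ s • v :=
    AntilipschitzWith.of_le_mul_dist fun s t ↦ by
      rw [dist_eq_norm, dist_eq_norm, ← sub_smul, norm_smul, NNReal.coe_inv, coe_nnnorm,
        mul_left_comm, inv_mul_cancel₀ hv, mul_one]
  antilipschitz.isUniformInducing
    (ContinuousLinearMap.toSpanSingleton 𝕜 v).uniformContinuous

theorem isComplete_image_smul_left_iff [CompleteSpace 𝕜] {v : E} (hv : ‖v‖ ≠ 0) {S : Set 𝕜} :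
    IsComplete ((fun s : 𝕜 ↦ s • v) '' S) ↔ IsClosed S := by
  rw [isComplete_image_iff (isUniformInducing_smul_left hv)]
  exact ⟨IsComplete.isClosed, IsClosed.isComplete⟩

end SMulLeft

theorem inv_Ici_one {G : Type*} [GroupWithZero G] [PartialOrder G] [ZeroLEOneClass G]
    [PosMulReflectLT G] : (Ici (1 : G))⁻¹ = Ioc 0 1 :=
  ext fun _ ↦ one_le_inv_iff₀

section RpowImage

theorem image_rpow_Ici_one_of_pos {r : ℝ} (hr : 0 < r) :
    (fun s : ℝ ↦ s ^ r) '' Ici 1 = Ici 1 := by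
  refine Subset.antisymm (image_subset_iff.2 fun s hs ↦ Real.one_le_rpow hs hr.le) fun t ht ↦ ?_
  exact ⟨t ^ r⁻¹, Real.one_le_rpow ht (inv_nonneg.2 hr.le),
    Real.rpow_inv_rpow (zero_le_one.trans ht) hr.ne'⟩

theorem image_rpow_Ici_one_of_neg {r : ℝ} (hr : r < 0) :
    (fun s : ℝ ↦ s ^ r) '' Ici 1 = Ioc 0 1 := by
  have rpow_eq_inv : EqOn (fun s : ℝ ↦ s ^ r) (fun s ↦ (s ^ (-r))⁻¹) (Ici 1) := fun s hs ↦ by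
    simp only [Real.rpow_neg (zero_le_one.trans hs), inv_inv]
  rw [rpow_eq_inv.image_eq, ← image_image (fun s : ℝ ↦ s⁻¹),
    image_rpow_Ici_one_of_pos (neg_pos.2 hr), image_inv_eq_inv, inv_Ici_one]

theorem image_rpow_Ioc_zero_one (r : ℝ) :
    (fun s : ℝ ↦ s ^ r) '' Ioc 0 1 = (fun s : ℝ ↦ s ^ (-r)) '' Ici 1 := by
  simp_rw [← inv_Ici_one, ← image_inv_eq_inv, image_image, Real.rpow_neg_eq_inv_rpow]

theorem isClosed_image_rpow_Ici_one_iff {r : ℝ} :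
    IsClosed ((fun s : ℝ ↦ s ^ r) '' Ici 1) ↔ 0 ≤ r := by
  rcases lt_trichotomy r 0 with hr | rfl | hr
  · simp [image_rpow_Ici_one_of_neg hr, hr.not_ge]
  · simp [nonempty_Ici.image_const]
  · simp [image_rpow_Ici_one_of_pos hr, isClosed_Ici, hr.le]

theorem isClosed_image_rpow_Ioc_zero_one_iff {r : ℝ} :
    IsClosed ((fun s : ℝ ↦ s ^ r) '' Ioc 0 1) ↔ r ≤ 0 := by
  rw [image_rpow_Ioc_zero_one, isClosed_image_rpow_Ici_one_iff, neg_nonneg]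

end RpowImage

section AngularMap

variable {X : Type*} [NormedAddCommGroup X] [NormedSpace ℝ X] {r : ℝ}

/-- The radial map `x ↦ ‖x‖ ^ (r - 1) • x`, which pulls the norm distance back to the
`r`-angular distance. -/
noncomputable def angularMap (r : ℝ) (x : X) : X := ‖x‖ ^ (r - 1) • x

theorem alphaD_eq_dist (x y : X) : alphaD r x y = dist (angularMap r x) (angularMap r y) :=
  (dist_eq_norm _ _).symm

theorem angularMap_smul {s : ℝ} (hs : 0 < s) (x : X) :
    angularMap r (s • x) = s ^ r • angularMap r x := by
  rw [angularMap, angularMap, norm_smul, Real.norm_of_nonneg hs.le,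
    Real.mul_rpow hs.le (norm_nonneg x), smul_smul, smul_smul, mul_right_comm,
    Real.rpow_sub_one hs.ne', div_mul_cancel₀ _ hs.ne']

theorem angularMap_ne_zero {x : X} (hx : x ≠ 0) : angularMap r x ≠ 0 :=
  smul_ne_zero (Real.rpow_pos_of_pos (norm_pos_iff.2 hx) _).ne' hx

theorem alphaComplete_iff_isComplete_image {A : Set X} :
    AlphaComplete r A ↔ IsComplete (angularMap r '' A) := by
  simp only [AlphaComplete, alphaD_eq_dist, ← tendsto_iff_dist_tendsto_zero]
  constructor
  · intro h
    rw [← completeSpace_coe_iff_isComplete]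
    refine Metric.complete_of_cauchySeq_tendsto fun v hv ↦ ?_
    choose u hu huv using fun n ↦ (v n).2
    obtain ⟨a, ha, hlim⟩ := h u hu <| by
      simpa only [huv, Subtype.dist_eq] using Metric.cauchySeq_iff.1 hv
    exact ⟨⟨_, mem_image_of_mem _ ha⟩, tendsto_subtype_rng.2 (by simpa only [huv] using hlim)⟩
  · intro h u hu hcauchy
    obtain ⟨-, ⟨a, ha, rfl⟩, hlim⟩ := cauchySeq_tendsto_of_isComplete h
      (fun n ↦ mem_image_of_mem _ (hu n)) (Metric.cauchySeq_iff.2 hcauchy)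
    exact ⟨a, ha, hlim⟩

theorem alphaComplete_image_smul_left_iff {e : X} (he : e ≠ 0) {S : Set ℝ} (hS : S ⊆ Ioi 0) :
    AlphaComplete r ((fun s : ℝ ↦ s • e) '' S) ↔ IsClosed ((fun s : ℝ ↦ s ^ r) '' S) := by
  have angularMap_image : angularMap r '' ((fun s : ℝ ↦ s • e) '' S) =
      (fun t : ℝ ↦ t • angularMap r e) '' ((fun s : ℝ ↦ s ^ r) '' S) := by
    rw [image_image, image_image]
    exact image_congr fun s hs ↦ angularMap_smul (hS hs) e
  rw [alphaComplete_iff_isComplete_image, angularMap_image,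
    isComplete_image_smul_left_iff (norm_ne_zero_iff.2 (angularMap_ne_zero he))]

theorem alphaComplete_image_smul_left_Ici_one_iff {e : X} (he : e ≠ 0) :
    AlphaComplete r ((fun s : ℝ ↦ s • e) '' Ici 1) ↔ 0 ≤ r :=
  (alphaComplete_image_smul_left_iff he (Ici_subset_Ioi.2 one_pos)).trans
    isClosed_image_rpow_Ici_one_iff

theorem alphaComplete_image_smul_left_Ioc_zero_one_iff {e : X} (he : e ≠ 0) :
    AlphaComplete r ((fun s : ℝ ↦ s • e) '' Ioc 0 1) ↔ r ≤ 0 :=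
  (alphaComplete_image_smul_left_iff he Ioc_subset_Ioi_self).trans
    isClosed_image_rpow_Ioc_zero_one_iff

end AngularMap

theorem stmt_7 {X : Type*} [NormedAddCommGroup X] [NormedSpace ℝ X] [Nontrivial X]
    (p q : ℝ) (hp : 0 < p) (hq : q < 0) :
    ∃ A B : Set X,
      A.Nonempty ∧ (∀ a ∈ A, a ≠ 0) ∧ AlphaComplete p A ∧ ¬ AlphaComplete q A ∧
      B.Nonempty ∧ (∀ b ∈ B, b ≠ 0) ∧ AlphaComplete q B ∧ ¬ AlphaComplete p B := by
  obtain ⟨e, he⟩ := exists_ne (0 : X)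
  refine ⟨(fun s : ℝ ↦ s • e) '' Ici 1, (fun s : ℝ ↦ s • e) '' Ioc 0 1,
    nonempty_Ici.image _, forall_mem_image.2 fun s hs ↦ ?_, ?_, ?_,
    (nonempty_Ioc.2 one_pos).image _, forall_mem_image.2 fun s hs ↦ ?_, ?_, ?_⟩
  · exact smul_ne_zero (one_pos.trans_le hs).ne' he
  · exact (alphaComplete_image_smul_left_Ici_one_iff he).2 hp.le
  · exact (alphaComplete_image_smul_left_Ici_one_iff he).not.2 hq.not_ge
  · exact smul_ne_zero hs.1.ne' he
  · exact (alphaComplete_image_smul_left_Ioc_zero_one_iff he).2 hq.le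
  · exact (alphaComplete_image_smul_left_Ioc_zero_one_iff he).not.2 hp.not_ge
end

section
/- Let X be a real inner product space with induced norm, let p be a real number and let x, y ∈ X be nonzero. Then: (i) if p < 1, α_p[x,y] ≤ β_p[x,y]; (ii) if p = 1, α_p[x,y] = β_p[x,y]; (iii) if p > 1, α_p[x,y] ≥ β_p[x,y]. Moreover, in cases (i) and (iii) equality holds if and only if ‖x‖ = ‖y‖. -/
/-!
Swapping the real coefficients `a`, `b` leaves the cross term of `‖a • x - b • y‖ ^ 2` unchanged, so
`‖a • x - b • y‖ ^ 2 - ‖b • x - a • y‖ ^ 2 = (a ^ 2 - b ^ 2) * (‖x‖ ^ 2 - ‖y‖ ^ 2)`.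
With `a = ‖x‖ ^ (p - 1)` and `b = ‖y‖ ^ (p - 1)` the left side is `α_p[x,y] ^ 2 - β_p[x,y] ^ 2`,
and the sign of the right side is determined by the monotonicity of `t ↦ t ^ (p - 1)`.
-/

section SwapCoefficients

variable {E : Type*} [SeminormedAddCommGroup E] [InnerProductSpace ℝ E]

theorem norm_smul_sub_smul_sq_sub_norm_swap_sq (a b : ℝ) (x y : E) :
    ‖a • x - b • y‖ ^ 2 - ‖b • x - a • y‖ ^ 2 = (a ^ 2 - b ^ 2) * (‖x‖ ^ 2 - ‖y‖ ^ 2) := by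
  simp only [norm_sub_sq_real, norm_smul, real_inner_smul_left, real_inner_smul_right, mul_pow,
    Real.norm_eq_abs, sq_abs]
  ring

theorem norm_smul_sub_smul_swap_lt {a b : ℝ} {x y : E} (hab : |b| < |a|) (hyx : ‖y‖ < ‖x‖) :
    ‖b • x - a • y‖ < ‖a • x - b • y‖ := by
  have hcoeff : 0 < a ^ 2 - b ^ 2 := sub_pos.2 (sq_lt_sq.2 hab)
  have hnorm : 0 < ‖x‖ ^ 2 - ‖y‖ ^ 2 :=
    sub_pos.2 (pow_lt_pow_left₀ hyx (norm_nonneg y) two_ne_zero)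
  have hsq : ‖b • x - a • y‖ ^ 2 < ‖a • x - b • y‖ ^ 2 := by
    rw [← sub_pos, norm_smul_sub_smul_sq_sub_norm_swap_sq]
    exact mul_pos hcoeff hnorm
  exact lt_of_pow_lt_pow_left₀ 2 (norm_nonneg _) hsq

end SwapCoefficients

section NormedSpace

variable {X : Type*} [NormedAddCommGroup X] [NormedSpace ℝ X]

theorem alphaD_comm (p : ℝ) (x y : X) : alphaD p x y = alphaD p y x :=
  norm_sub_rev _ _

theorem betaD_comm (p : ℝ) (x y : X) : betaD p x y = betaD p y x :=
  norm_sub_rev _ _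

theorem alphaD_one_eq_betaD_one (x y : X) : alphaD 1 x y = betaD 1 x y := by
  simp only [alphaD, betaD, sub_self, Real.rpow_zero]

theorem alphaD_eq_betaD_of_norm_eq (p : ℝ) {x y : X} (h : ‖x‖ = ‖y‖) :
    alphaD p x y = betaD p x y := by
  rw [alphaD, betaD, h]

end NormedSpace

section InnerProductSpace

variable {X : Type*} [NormedAddCommGroup X] [InnerProductSpace ℝ X] {p : ℝ} {x y : X}

theorem betaD_lt_alphaD_of_one_lt (hp : 1 < p) (hne : ‖x‖ ≠ ‖y‖) :
    betaD p x y < alphaD p x y := by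
  wlog hyx : ‖y‖ < ‖x‖ generalizing x y
  · rw [alphaD_comm, betaD_comm]
    exact this hne.symm (hne.lt_of_le (not_lt.1 hyx))
  have hpow : ‖y‖ ^ (p - 1) < ‖x‖ ^ (p - 1) :=
    Real.rpow_lt_rpow (norm_nonneg y) hyx (sub_pos.2 hp)
  have habs : |‖y‖ ^ (p - 1)| < |‖x‖ ^ (p - 1)| :=
    (abs_of_nonneg (by positivity)).trans_lt (hpow.trans_le (le_abs_self _))
  exact norm_smul_sub_smul_swap_lt habs hyx

theorem alphaD_lt_betaD_of_lt_one (hp : p < 1) (hx : x ≠ 0) (hy : y ≠ 0) (hne : ‖x‖ ≠ ‖y‖) :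
    alphaD p x y < betaD p x y := by
  wlog hyx : ‖y‖ < ‖x‖ generalizing x y
  · rw [alphaD_comm, betaD_comm]
    exact this hy hx hne.symm (hne.lt_of_le (not_lt.1 hyx))
  have hpow : ‖x‖ ^ (p - 1) < ‖y‖ ^ (p - 1) :=
    Real.rpow_lt_rpow_of_neg (norm_pos_iff.2 hy) hyx (sub_neg.2 hp)
  have habs : |‖x‖ ^ (p - 1)| < |‖y‖ ^ (p - 1)| :=
    (abs_of_nonneg (by positivity)).trans_lt (hpow.trans_le (le_abs_self _))
  exact norm_smul_sub_smul_swap_lt habs hyx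

theorem betaD_le_alphaD_of_one_lt (hp : 1 < p) : betaD p x y ≤ alphaD p x y := by
  rcases eq_or_ne ‖x‖ ‖y‖ with heq | hne
  · exact (alphaD_eq_betaD_of_norm_eq p heq).ge
  · exact (betaD_lt_alphaD_of_one_lt hp hne).le

theorem alphaD_le_betaD_of_lt_one (hp : p < 1) (hx : x ≠ 0) (hy : y ≠ 0) :
    alphaD p x y ≤ betaD p x y := by
  rcases eq_or_ne ‖x‖ ‖y‖ with heq | hne
  · exact (alphaD_eq_betaD_of_norm_eq p heq).le
  · exact (alphaD_lt_betaD_of_lt_one hp hx hy hne).le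

theorem alphaD_eq_betaD_iff_norm_eq (hp : p ≠ 1) (hx : x ≠ 0) (hy : y ≠ 0) :
    alphaD p x y = betaD p x y ↔ ‖x‖ = ‖y‖ := by
  refine ⟨fun h => ?_, alphaD_eq_betaD_of_norm_eq p⟩
  by_contra hne
  rcases lt_or_gt_of_ne hp with hlt | hgt
  · exact (alphaD_lt_betaD_of_lt_one hlt hx hy hne).ne h
  · exact (betaD_lt_alphaD_of_one_lt hgt hne).ne' h

end InnerProductSpace

theorem stmt_8 {X : Type*} [NormedAddCommGroup X] [InnerProductSpace ℝ X]
    (p : ℝ) (x y : X) (hx : x ≠ 0) (hy : y ≠ 0) :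
    (p < 1 → alphaD p x y ≤ betaD p x y) ∧
    (p = 1 → alphaD p x y = betaD p x y) ∧
    (1 < p → betaD p x y ≤ alphaD p x y) ∧
    (p < 1 → (alphaD p x y = betaD p x y ↔ ‖x‖ = ‖y‖)) ∧
    (1 < p → (alphaD p x y = betaD p x y ↔ ‖x‖ = ‖y‖)) := by
  refine ⟨fun hp => ?_, fun hp => ?_, fun hp => ?_, fun hp => ?_, fun hp => ?_⟩
  · exact alphaD_le_betaD_of_lt_one hp hx hy
  · rw [hp, alphaD_one_eq_betaD_one]
  · exact betaD_le_alphaD_of_one_lt hp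
  · exact alphaD_eq_betaD_iff_norm_eq hp.ne hx hy
  · exact alphaD_eq_betaD_iff_norm_eq hp.ne' hx hy
end

section
/- Let X be a real inner product space, let x, y ∈ X be linearly independent, and let t be a real number satisfying (−⟨x,y⟩ − √(‖x‖²‖y‖² − ⟨x,y⟩²))/‖y‖² ≤ t ≤ (−⟨x,y⟩ + √(‖x‖²‖y‖² − ⟨x,y⟩²))/‖y‖². Then ‖x + t•y‖ = (√(‖x‖²‖y‖² − ⟨x,y⟩²)/‖y‖) · Σ_{k=0}^∞ C(1/2, k) · ( (t‖y‖² + ⟨x,y⟩)/√(‖x‖²‖y‖² − ⟨x,y⟩²) )^(2k), where C(1/2, k) = (∏_{i=0}^{k−1} (1/2 − i)) / k! is the generalized binomial coefficient. -/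
open scoped RealInnerProductSpace

/-- The generalized binomial coefficient `C(r, k) = (∏_{i=0}^{k-1} (r - i)) / k!`. -/
noncomputable def genBinom (r : ℝ) (k : ℕ) : ℝ :=
  (∏ i ∈ Finset.range k, (r - i)) / (Nat.factorial k : ℝ)

/-!
Completing the square gives `‖y‖² ‖x + t • y‖² = D + u²`, where `D = ‖x‖² ‖y‖² - ⟪x, y⟫²` is the
Gram determinant and `u = t ‖y‖² + ⟪x, y⟫`; the bounds on `t` say exactly that `|u| ≤ √D`. The
formula is therefore the binomial series of `(1 + z) ^ (1 / 2)` at `z = (u / √D)²`. The bounds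
allow `z = 1`, on the boundary of the disc of convergence: for `0 ≤ r` the coefficients `C(r, k)`
are absolutely summable, so the binomial series is continuous on `[-1, 1]` and the identity
extends there from the open interval.
-/

lemma genBinom_eq_choose (r : ℝ) (k : ℕ) : genBinom r k = Ring.choose r k := by
  rw [Ring.choose_eq_smul, Polynomial.descPochhammer_smeval_eq_ascPochhammer,
    Polynomial.ascPochhammer_smeval_eq_eval, ← descPochhammer_eval_eq_ascPochhammer,
    descPochhammer_eval_eq_prod_range, genBinom, smul_eq_mul, div_eq_inv_mul]

lemma succ_mul_genBinom_succ (r : ℝ) (k : ℕ) :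
    ((k + 1 : ℕ) : ℝ) * genBinom r (k + 1) = (r - k) * genBinom r k := by
  have hk : ((k + 1 : ℕ) : ℝ) ≠ 0 := by positivity
  simp only [genBinom, Finset.prod_range_succ, Nat.factorial_succ, Nat.cast_mul]
  field_simp

lemma mul_abs_genBinom_eq_sub {r : ℝ} {k : ℕ} (hrk : r ≤ k) :
    r * |genBinom r k| = k * |genBinom r k| - (k + 1 : ℕ) * |genBinom r (k + 1)| := by
  have h := congrArg abs (succ_mul_genBinom_succ r k)
  rw [abs_mul, abs_mul, Nat.abs_cast, abs_of_nonpos (sub_nonpos.2 hrk)] at h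
  linarith

lemma mul_sum_range_abs_genBinom_add {r : ℝ} {N : ℕ} (hrN : r ≤ N) (n : ℕ) :
    r * ∑ k ∈ Finset.range n, |genBinom r (k + N)| =
      N * |genBinom r N| - (n + N : ℕ) * |genBinom r (n + N)| := by
  have hterm (k : ℕ) : r * |genBinom r (k + N)| =
      (k + N : ℕ) * |genBinom r (k + N)| - (k + 1 + N : ℕ) * |genBinom r (k + 1 + N)| := by
    rw [add_right_comm]
    exact mul_abs_genBinom_eq_sub (hrN.trans (by simp))
  simp only [Finset.mul_sum, hterm]
  rw [Finset.sum_range_sub' fun k ↦ ((k + N : ℕ) : ℝ) * |genBinom r (k + N)|, zero_add]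

lemma summable_abs_genBinom {r : ℝ} (hr : 0 ≤ r) : Summable fun k ↦ |genBinom r k| := by
  rcases hr.eq_or_lt with rfl | hr
  · refine summable_of_ne_finset_zero (s := {0}) fun k hk ↦ ?_
    rw [genBinom_eq_choose, Ring.choose_zero_pos ℝ (Nat.pos_of_ne_zero (by simpa using hk)),
      abs_zero]
  · obtain ⟨N, hrN⟩ := exists_nat_ge r
    rw [← summable_nat_add_iff N]
    refine summable_of_sum_range_le (c := N * |genBinom r N| / r) (fun _ ↦ abs_nonneg _) fun n ↦ ?_
    rw [le_div_iff₀' hr, mul_sum_range_abs_genBinom_add hrN]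
    exact sub_le_self _ (by positivity)

lemma norm_genBinom_mul_pow_le {z : ℝ} (hz : |z| ≤ 1) (r : ℝ) (k : ℕ) :
    ‖genBinom r k * z ^ k‖ ≤ |genBinom r k| := by
  rw [norm_mul, norm_pow]
  exact mul_le_of_le_one_right (norm_nonneg _) (pow_le_one₀ (norm_nonneg _) hz)

lemma tsum_genBinom_mul_pow_of_abs_lt_one (r : ℝ) {z : ℝ} (hz : |z| < 1) :
    ∑' k, genBinom r k * z ^ k = (1 + z) ^ r := by
  have hmem : z ∈ Metric.eball (0 : ℝ) 1 := by simpa [Metric.mem_eball, edist_dist] using hz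
  have hsum := Real.one_add_rpow_hasFPowerSeriesOnBall_zero (a := r).hasSum hmem
  simpa [genBinom_eq_choose, binomialSeries, FormalMultilinearSeries.coeff_ofScalars, mul_comm]
    using hsum.tsum_eq

lemma tsum_genBinom_mul_pow {r z : ℝ} (hr : 0 ≤ r) (hz : |z| ≤ 1) :
    ∑' k, genBinom r k * z ^ k = (1 + z) ^ r := by
  have hseries : ContinuousOn (fun z : ℝ ↦ ∑' k, genBinom r k * z ^ k) (Set.Icc (-1) 1) :=
    continuousOn_tsum (fun k ↦ by fun_prop) (summable_abs_genBinom hr)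
      fun k z hz ↦ norm_genBinom_mul_pow_le (abs_le.2 hz) r k
  have hrpow : ContinuousOn (fun z : ℝ ↦ (1 + z) ^ r) (Set.Icc (-1) 1) :=
    ((Real.continuous_rpow_const hr).comp (continuous_const_add 1)).continuousOn
  have heq : Set.EqOn (fun z : ℝ ↦ ∑' k, genBinom r k * z ^ k) (fun z ↦ (1 + z) ^ r)
      (Set.Ioo (-1) 1) :=
    fun z hz ↦ tsum_genBinom_mul_pow_of_abs_lt_one r (abs_lt.2 hz)
  exact heq.of_subset_closure hseries hrpow Set.Ioo_subset_Icc_self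
    (closure_Ioo (by norm_num)).ge (abs_le.1 hz)

lemma sqrt_add_sq_eq_sqrt_mul_tsum {a b : ℝ} (ha : 0 < a) (hb : |b| ≤ √a) :
    √(a + b ^ 2) = √a * ∑' k, genBinom (1 / 2) k * (b / √a) ^ (2 * k) := by
  have hz : |(b / √a) ^ 2| ≤ 1 := by
    rw [abs_pow, abs_div, abs_of_nonneg (Real.sqrt_nonneg a)]
    exact pow_le_one₀ (by positivity) (div_le_one_of_le₀ hb (Real.sqrt_nonneg a))
  simp only [pow_mul]
  rw [tsum_genBinom_mul_pow (by norm_num) hz, ← Real.sqrt_eq_rpow, ← Real.sqrt_mul ha.le,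
    div_pow, Real.sq_sqrt ha.le, mul_add, mul_one, mul_div_cancel₀ _ ha.ne']

section InnerProductSpace

variable {X : Type*} [NormedAddCommGroup X] [InnerProductSpace ℝ X]

lemma norm_sq_mul_norm_sq_sub_inner_sq_pos {x y : X} (h : LinearIndependent ℝ ![x, y]) :
    0 < ‖x‖ ^ 2 * ‖y‖ ^ 2 - ⟪x, y⟫ ^ 2 := by
  have hdet := (Matrix.posDef_gram_of_linearIndependent h).det_pos
  simpa [Matrix.det_fin_two, Matrix.gram_apply, real_inner_comm x y, sq] using hdet

lemma sq_norm_add_smul_mul_norm (x y : X) (t : ℝ) :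
    (‖x + t • y‖ * ‖y‖) ^ 2 =
      ‖x‖ ^ 2 * ‖y‖ ^ 2 - ⟪x, y⟫ ^ 2 + (t * ‖y‖ ^ 2 + ⟪x, y⟫) ^ 2 := by
  rw [mul_pow, norm_add_sq_real, real_inner_smul_right, norm_smul, mul_pow, Real.norm_eq_abs,
    sq_abs]
  ring

end InnerProductSpace

theorem stmt_10 {X : Type*} [NormedAddCommGroup X] [InnerProductSpace ℝ X]
    (x y : X) (h : LinearIndependent ℝ ![x, y]) (t : ℝ)
    (ht1 : (-⟪x, y⟫ - Real.sqrt (‖x‖ ^ 2 * ‖y‖ ^ 2 - ⟪x, y⟫ ^ 2)) / ‖y‖ ^ 2 ≤ t)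
    (ht2 : t ≤ (-⟪x, y⟫ + Real.sqrt (‖x‖ ^ 2 * ‖y‖ ^ 2 - ⟪x, y⟫ ^ 2)) / ‖y‖ ^ 2) :
    ‖x + t • y‖ =
      (Real.sqrt (‖x‖ ^ 2 * ‖y‖ ^ 2 - ⟪x, y⟫ ^ 2) / ‖y‖) *
        ∑' k : ℕ, genBinom (1 / 2) k *
          ((t * ‖y‖ ^ 2 + ⟪x, y⟫) / Real.sqrt (‖x‖ ^ 2 * ‖y‖ ^ 2 - ⟪x, y⟫ ^ 2)) ^ (2 * k) := by
  have hy : 0 < ‖y‖ := norm_pos_iff.2 (h.ne_zero 1)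
  have hu : |t * ‖y‖ ^ 2 + ⟪x, y⟫| ≤ √(‖x‖ ^ 2 * ‖y‖ ^ 2 - ⟪x, y⟫ ^ 2) := by
    rw [div_le_iff₀ (by positivity)] at ht1
    rw [le_div_iff₀ (by positivity)] at ht2
    exact abs_le.2 ⟨by linarith, by linarith⟩
  rw [div_mul_eq_mul_div,
    ← sqrt_add_sq_eq_sqrt_mul_tsum (norm_sq_mul_norm_sq_sub_inner_sq_pos h) hu,
    ← sq_norm_add_smul_mul_norm, Real.sqrt_sq (by positivity), mul_div_cancel_right₀ _ hy.ne']
end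

section
/- Let X be a real inner product space and let x, y ∈ X satisfy ‖y‖•x ≠ ‖x‖•y (in particular x, y are nonzero). Then the error of the Cauchy–Schwarz inequality satisfies √(‖x‖²‖y‖² − ⟨x,y⟩²) ≤ 2‖x‖‖y‖‖x − y‖² / ‖ ‖y‖•x − ‖x‖•y ‖. -/
open scoped RealInnerProductSpace

/-!
With `p = ‖x‖ ‖y‖`, `r = re ⟪x, y⟫` and `d = ‖ ‖y‖ • x - ‖x‖ • y ‖`, expanding the square gives
`d² = 2 p (p - r)`. Hence `d² - (p² - r²) = (p - r)²` and
`p ‖x - y‖² - d² = p (‖x‖ - ‖y‖)²` are both nonnegative. So the Cauchy–Schwarz error is at most `d`,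
and `d = d² / d ≤ p ‖x - y‖² / d`, which is half of the required bound.
-/

section RCLike

variable {𝕜 E : Type*} [RCLike 𝕜] [SeminormedAddCommGroup E] [InnerProductSpace 𝕜 E]

theorem norm_norm_smul_sub_norm_smul_sq (x y : E) :
    ‖(‖y‖ : 𝕜) • x - (‖x‖ : 𝕜) • y‖ ^ 2 =
      2 * (‖x‖ * ‖y‖) * (‖x‖ * ‖y‖ - RCLike.re (inner 𝕜 x y)) := by
  rw [norm_sub_sq (𝕜 := 𝕜), inner_smul_left, inner_smul_right, RCLike.conj_ofReal,
    RCLike.re_ofReal_mul, RCLike.re_ofReal_mul, norm_smul, norm_smul, RCLike.norm_ofReal,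
    RCLike.norm_ofReal, abs_norm, abs_norm]
  ring

theorem sqrt_norm_sq_mul_norm_sq_sub_norm_inner_sq_le (x y : E) :
    √(‖x‖ ^ 2 * ‖y‖ ^ 2 - ‖inner 𝕜 x y‖ ^ 2) ≤ ‖(‖y‖ : 𝕜) • x - (‖x‖ : 𝕜) • y‖ := by
  have re_sq_le : RCLike.re (inner 𝕜 x y) ^ 2 ≤ ‖inner 𝕜 x y‖ ^ 2 :=
    sq_le_sq.mpr (by simpa only [abs_norm] using RCLike.abs_re_le_norm (inner 𝕜 x y))
  refine Real.sqrt_le_iff.mpr ⟨norm_nonneg _, ?_⟩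
  calc ‖x‖ ^ 2 * ‖y‖ ^ 2 - ‖inner 𝕜 x y‖ ^ 2
      ≤ (‖x‖ * ‖y‖) ^ 2 - RCLike.re (inner 𝕜 x y) ^ 2 := by rw [mul_pow]; gcongr
    _ ≤ (‖x‖ * ‖y‖) ^ 2 - RCLike.re (inner 𝕜 x y) ^ 2
          + (‖x‖ * ‖y‖ - RCLike.re (inner 𝕜 x y)) ^ 2 := le_add_of_nonneg_right (sq_nonneg _)
    _ = ‖(‖y‖ : 𝕜) • x - (‖x‖ : 𝕜) • y‖ ^ 2 := by rw [norm_norm_smul_sub_norm_smul_sq]; ring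

theorem norm_norm_smul_sub_norm_smul_sq_le (x y : E) :
    ‖(‖y‖ : 𝕜) • x - (‖x‖ : 𝕜) • y‖ ^ 2 ≤ ‖x‖ * ‖y‖ * ‖x - y‖ ^ 2 := by
  calc ‖(‖y‖ : 𝕜) • x - (‖x‖ : 𝕜) • y‖ ^ 2
      = ‖x‖ * ‖y‖ * (‖x - y‖ ^ 2 - (‖x‖ - ‖y‖) ^ 2) := by
        rw [norm_norm_smul_sub_norm_smul_sq, norm_sub_sq (𝕜 := 𝕜)]; ring
    _ ≤ ‖x‖ * ‖y‖ * ‖x - y‖ ^ 2 := by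
        gcongr
        exact sub_le_self _ (sq_nonneg _)

theorem stmt_17_general (x y : E) (hxy : ‖(‖y‖ : 𝕜) • x - (‖x‖ : 𝕜) • y‖ ≠ 0) :
    √(‖x‖ ^ 2 * ‖y‖ ^ 2 - ‖inner 𝕜 x y‖ ^ 2) ≤
      ‖x‖ * ‖y‖ * ‖x - y‖ ^ 2 / ‖(‖y‖ : 𝕜) • x - (‖x‖ : 𝕜) • y‖ := by
  calc √(‖x‖ ^ 2 * ‖y‖ ^ 2 - ‖inner 𝕜 x y‖ ^ 2)
      ≤ ‖(‖y‖ : 𝕜) • x - (‖x‖ : 𝕜) • y‖ := sqrt_norm_sq_mul_norm_sq_sub_norm_inner_sq_le x y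
    _ = ‖(‖y‖ : 𝕜) • x - (‖x‖ : 𝕜) • y‖ ^ 2 / ‖(‖y‖ : 𝕜) • x - (‖x‖ : 𝕜) • y‖ := by
        rw [sq, mul_div_cancel_right₀ _ hxy]
    _ ≤ ‖x‖ * ‖y‖ * ‖x - y‖ ^ 2 / ‖(‖y‖ : 𝕜) • x - (‖x‖ : 𝕜) • y‖ := by
        gcongr
        exact norm_norm_smul_sub_norm_smul_sq_le x y

end RCLike

theorem stmt_17 {X : Type*} [NormedAddCommGroup X] [InnerProductSpace ℝ X]
    (x y : X) (hxy : ‖y‖ • x ≠ ‖x‖ • y) :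
    Real.sqrt (‖x‖ ^ 2 * ‖y‖ ^ 2 - ⟪x, y⟫ ^ 2) ≤
      2 * ‖x‖ * ‖y‖ * ‖x - y‖ ^ 2 / ‖‖y‖ • x - ‖x‖ • y‖ := by
  have half_bound := stmt_17_general (𝕜 := ℝ) x y (norm_ne_zero_iff.mpr (sub_ne_zero.mpr hxy))
  simp only [Real.norm_eq_abs, sq_abs, RCLike.ofReal_real_eq_id, id] at half_bound
  exact half_bound.trans (by gcongr; linarith [norm_nonneg x])
end

section
/- Let X be a real normed linear space and let p be a real number with p > 1. Then the norm of X satisfies the parallelogram law (equivalently, X is an inner product space) if and only if for all nonzero x, y ∈ X, α_p[x,y] ≥ β_p[x,y]. Dually, if p < 1, the norm satisfies the parallelogram law if and only if for all nonzero x, y ∈ X, α_p[x,y] ≤ β_p[x,y]. -/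
/-- The norm satisfies the parallelogram law; by the Jordan–von Neumann theorem this
holds precisely when the norm is induced by an inner product. -/
def ParallelogramLaw (X : Type*) [NormedAddCommGroup X] : Prop :=
  ∀ x y : X, ‖x + y‖ ^ 2 + ‖x - y‖ ^ 2 = 2 * ‖x‖ ^ 2 + 2 * ‖y‖ ^ 2

open Filter Set Topology

section RealAnalysis

lemma apply_zero_le_of_apply_smul_le {E α : Type*} [AddCommMonoid E] [Module ℝ E]
    [TopologicalSpace E] [ContinuousSMul ℝ E] [Preorder α] [TopologicalSpace α]
    [ClosedIicTopology α] {F : E → α} {q : ℝ} (hF : ContinuousAt F 0) (hq : |q| < 1)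
    (h : ∀ x, F (q • x) ≤ F x) (x : E) : F 0 ≤ F x := by
  have iterate_le : ∀ n : ℕ, F (q ^ n • x) ≤ F x := fun n => by
    induction n with
    | zero => simp
    | succ n ih =>
      rw [pow_succ', mul_smul]
      exact (h _).trans ih
  have tendsto_zero : Tendsto (fun n : ℕ => q ^ n • x) atTop (𝓝 0) := by
    simpa using (tendsto_pow_atTop_nhds_zero_of_abs_lt_one hq).smul_const x
  exact le_of_tendsto' (hF.tendsto.comp tendsto_zero) iterate_le

lemma le_of_convexOn_of_eventually_sub_mul_norm_sq_le {E : Type*} [SeminormedAddCommGroup E]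
    [NormedSpace ℝ E] {f : E → ℝ} (hf : ConvexOn ℝ univ f) {x : E} {C : ℝ}
    (h : ∀ᶠ y in 𝓝 x, f x - C * ‖y - x‖ ^ 2 ≤ f y) (y : E) : f x ≤ f y := by
  have segment_tendsto : Tendsto (fun ε : ℝ => (1 - ε) • x + ε • y) (𝓝[>] 0) (𝓝 x) := by
    have : Continuous fun ε : ℝ => (1 - ε) • x + ε • y := by fun_prop
    simpa using (this.tendsto 0).mono_left nhdsWithin_le_nhds
  have lower_tendsto : Tendsto (fun ε : ℝ => f x - C * ε * ‖y - x‖ ^ 2) (𝓝[>] 0) (𝓝 (f x)) := by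
    have : Continuous fun ε : ℝ => f x - C * ε * ‖y - x‖ ^ 2 := by fun_prop
    simpa using (this.tendsto 0).mono_left nhdsWithin_le_nhds
  refine le_of_tendsto lower_tendsto ?_
  filter_upwards [segment_tendsto.eventually h, Ioo_mem_nhdsGT one_pos] with ε hε ⟨hε0, hε1⟩
  have upper : f ((1 - ε) • x + ε • y) ≤ (1 - ε) * f x + ε * f y :=
    hf.2 (mem_univ x) (mem_univ y) (sub_nonneg.2 hε1.le) hε0.le (sub_add_cancel 1 ε)
  have hdist : ‖(1 - ε) • x + ε • y - x‖ = ε * ‖y - x‖ := by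
    rw [show (1 - ε) • x + ε • y - x = ε • (y - x) by module, norm_smul_of_nonneg hε0.le]
  rw [hdist] at hε
  refine le_of_mul_le_mul_left ?_ hε0
  linear_combination hε + upper

end RealAnalysis

section Orthogonality

variable {X : Type*} [NormedAddCommGroup X] {x y u v : X}

/-- Isosceles (James) orthogonality of two vectors. -/
def IsIsoscelesOrtho (x y : X) : Prop :=
  ‖x + y‖ = ‖x - y‖

lemma IsIsoscelesOrtho.symm (h : IsIsoscelesOrtho x y) : IsIsoscelesOrtho y x := by
  rwa [IsIsoscelesOrtho, add_comm, norm_sub_rev]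

variable [NormedSpace ℝ X]

/-- Birkhoff–James orthogonality: `0` is a best approximation of `x` on the line `ℝ y`. This is
not a symmetric relation in general. -/
def IsBirkhoffOrtho (x y : X) : Prop :=
  ∀ t : ℝ, ‖x‖ ≤ ‖x + t • y‖

/-- The property of a normed space that isosceles orthogonality implies Birkhoff orthogonality;
it turns out to characterize inner product spaces. -/
def IsoscelesImpliesBirkhoff (X : Type*) [NormedAddCommGroup X] [NormedSpace ℝ X] : Prop :=
  ∀ ⦃x y : X⦄, IsIsoscelesOrtho x y → IsBirkhoffOrtho x y

lemma isIsoscelesOrtho_add_sub (h : ‖u‖ = ‖v‖) : IsIsoscelesOrtho (u + v) (u - v) := by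
  rw [IsIsoscelesOrtho, show u + v + (u - v) = (2 : ℝ) • u by module,
    show u + v - (u - v) = (2 : ℝ) • v by module, norm_smul, norm_smul, h]

lemma IsBirkhoffOrtho.smul (h : IsBirkhoffOrtho x y) (a b : ℝ) :
    IsBirkhoffOrtho (a • x) (b • y) := by
  intro t
  obtain rfl | ha := eq_or_ne a 0
  · simp
  · have hfactor : a • x + t • b • y = a • (x + (t * b / a) • y) := by
      rw [smul_add, smul_smul, smul_smul, mul_div_cancel₀ _ ha]
    rw [hfactor, norm_smul, norm_smul]
    gcongr
    exact h _

lemma isBirkhoffOrtho_smul_smul_iff {a b : ℝ} (ha : a ≠ 0) (hb : b ≠ 0) :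
    IsBirkhoffOrtho (a • x) (b • y) ↔ IsBirkhoffOrtho x y :=
  ⟨fun h => by simpa [smul_smul, ha, hb] using h.smul a⁻¹ b⁻¹, fun h => h.smul a b⟩

lemma tendsto_norm_add_smul_cocompact (x : X) (hy : y ≠ 0) :
    Tendsto (fun t : ℝ => ‖x + t • y‖) (cocompact ℝ) atTop := by
  have lower : Tendsto (fun t : ℝ => ‖t‖ * ‖y‖ - ‖x‖) (cocompact ℝ) atTop :=
    tendsto_atTop_add_const_right _ _
      ((tendsto_norm_cocompact_atTop (E := ℝ)).atTop_mul_const (norm_pos_iff.2 hy))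
  refine tendsto_atTop_mono (fun t => ?_) lower
  rw [← norm_smul, add_comm, ← sub_neg_eq_add, ← norm_neg x]
  exact norm_sub_norm_le _ _

lemma exists_nonneg_norm_add_smul_eq (hy : y ≠ 0) {c : ℝ} (hc : ‖x‖ ≤ c) :
    ∃ t : ℝ, 0 ≤ t ∧ ‖x + t • y‖ = c := by
  have hcont : Continuous fun t : ℝ => ‖x + t • y‖ := by fun_prop
  exact intermediate_value_Ici hcont.continuousOn
    ((tendsto_norm_add_smul_cocompact x hy).mono_left atTop_le_cocompact)
    (show c ∈ Ici ‖x + (0 : ℝ) • y‖ by simpa using hc)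

lemma exists_isBirkhoffOrtho_sub_smul (x z : X) : ∃ m : ℝ, IsBirkhoffOrtho (z - m • x) x := by
  obtain rfl | hx := eq_or_ne x 0
  · exact ⟨0, fun t => by simp⟩
  have hcont : Continuous fun t : ℝ => ‖z + t • x‖ := by fun_prop
  obtain ⟨m, hm⟩ := hcont.exists_forall_le (tendsto_norm_add_smul_cocompact z hx)
  refine ⟨-m, fun t => ?_⟩
  rw [neg_smul, sub_neg_eq_add, add_assoc, ← add_smul]
  exact hm (m + t)

lemma one_sub_tanh_sq_mul_norm_le {t : ℝ} (h : ‖x‖ ≤ ‖Real.cosh t • x + Real.sinh t • y‖) :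
    (1 - Real.tanh t ^ 2) * ‖x‖ ≤ ‖x + Real.tanh t • y‖ := by
  have hcosh : 0 < Real.cosh t := Real.cosh_pos t
  have hsq : 1 - Real.tanh t ^ 2 = (Real.cosh t ^ 2)⁻¹ := by
    rw [Real.tanh_eq_sinh_div_cosh]
    field_simp
    exact Real.cosh_sq_sub_sinh_sq t
  have hscale : Real.cosh t • (x + Real.tanh t • y) = Real.cosh t • x + Real.sinh t • y := by
    rw [smul_add, smul_smul, Real.tanh_eq_sinh_div_cosh, mul_div_cancel₀ _ hcosh.ne']
  calc (1 - Real.tanh t ^ 2) * ‖x‖ = (Real.cosh t ^ 2)⁻¹ * ‖x‖ := by rw [hsq]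
    _ ≤ (Real.cosh t)⁻¹ * ‖x‖ := by
      gcongr
      exact le_self_pow₀ (Real.one_le_cosh t) two_ne_zero
    _ ≤ (Real.cosh t)⁻¹ * ‖Real.cosh t • (x + Real.tanh t • y)‖ := by
      rw [hscale]
      gcongr
    _ = ‖x + Real.tanh t • y‖ := by
      rw [norm_smul_of_nonneg hcosh.le, inv_mul_cancel_left₀ hcosh.ne']

lemma convexOn_norm_add_smul (x y : X) : ConvexOn ℝ univ fun s : ℝ => ‖x + s • y‖ := by
  have hcomp : norm ∘ AffineMap.lineMap x (x + y) = fun s : ℝ => ‖x + s • y‖ := by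
    ext s
    simp [AffineMap.lineMap_apply, add_comm]
  exact hcomp ▸ convexOn_univ_norm.comp_affineMap (AffineMap.lineMap x (x + y))

lemma isBirkhoffOrtho_of_norm_le_cosh_smul_add_sinh_smul
    (h : ∀ t : ℝ, ‖x‖ ≤ ‖Real.cosh t • x + Real.sinh t • y‖) : IsBirkhoffOrtho x y := by
  have near_zero : ∀ᶠ s : ℝ in 𝓝 0, ‖x + (0 : ℝ) • y‖ - ‖x‖ * ‖s - 0‖ ^ 2 ≤ ‖x + s • y‖ := by
    filter_upwards [Ioo_mem_nhds (neg_one_lt_zero (R := ℝ)) one_pos] with s hs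
    obtain ⟨t, rfl⟩ : ∃ t, Real.tanh t = s := ⟨_, Real.tanh_artanh hs⟩
    rw [zero_smul, add_zero, sub_zero, Real.norm_eq_abs, sq_abs]
    linear_combination one_sub_tanh_sq_mul_norm_le (h t)
  intro s
  simpa using le_of_convexOn_of_eventually_sub_mul_norm_sq_le
    (convexOn_norm_add_smul x y) near_zero s

end Orthogonality

namespace IsBirkhoffOrtho

variable {X : Type*} [NormedAddCommGroup X] [NormedSpace ℝ X] {x y : X}

/- If `x + 2 • y` were longer than `x`, rescale it by `r < 1` to `c` with `‖c‖ = ‖x‖`. As `x + c` is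
a multiple of a point of the flat segment `[x, x + y]` of the sphere, `‖x + c‖ = (1 + r) * ‖x‖`;
but the line through `x + c` in direction `x - c` meets the ray of `x + y` at a shorter vector,
contradicting `x + c ⟂ x - c`. -/
lemma norm_add_two_smul_eq (hX : IsoscelesImpliesBirkhoff X) (h : IsBirkhoffOrtho x y)
    (hxy : ‖x + y‖ = ‖x‖) : ‖x + (2 : ℝ) • y‖ = ‖x‖ := by
  by_contra hne
  have hlt : ‖x‖ < ‖x + (2 : ℝ) • y‖ := (h 2).lt_of_ne' hne
  obtain rfl | hx := eq_or_ne x 0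
  · simp_all
  have hx0 : 0 < ‖x‖ := norm_pos_iff.2 hx
  obtain ⟨r, hr0, hr1, hr⟩ : ∃ r : ℝ, 0 < r ∧ r < 1 ∧ ‖x‖ = ‖r • (x + (2 : ℝ) • y)‖ :=
    ⟨‖x‖ / ‖x + (2 : ℝ) • y‖, div_pos hx0 (hx0.trans hlt), (div_lt_one (hx0.trans hlt)).2 hlt, by
      rw [norm_smul_of_nonneg (by positivity), div_mul_cancel₀ _ (hx0.trans hlt).ne']⟩
  set c := r • (x + (2 : ℝ) • y) with hc
  have hr' : 1 + r ≠ 0 := by positivity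
  have lower : (1 + r) * ‖x‖ ≤ ‖x + c‖ := by
    have hsum : x + c = (1 + r) • (x + (2 * r / (1 + r)) • y) := by
      rw [smul_add, smul_smul, mul_div_cancel₀ _ hr', hc]; module
    rw [hsum, norm_smul_of_nonneg (by positivity)]
    gcongr
    exact h _
  have upper : ‖x + c‖ ≤ 4 * r / (1 + r) * ‖x‖ := by
    have hcross : x + c + (-((1 - r) / (1 + r))) • (x - c) = (4 * r / (1 + r)) • (x + y) := by
      rw [hc]; match_scalars <;> field_simp <;> ring
    rw [← hxy, ← norm_smul_of_nonneg (by positivity), ← hcross]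
    exact hX (isIsoscelesOrtho_add_sub hr) _
  have : (1 + r) * (1 + r) ≤ 4 * r :=
    (le_div_iff₀ (by positivity)).1 (le_of_mul_le_mul_right (lower.trans upper) hx0)
  nlinarith [sq_pos_of_pos (sub_pos.2 hr1)]

lemma eq_zero_of_norm_add_eq (hX : IsoscelesImpliesBirkhoff X) (h : IsBirkhoffOrtho x y)
    (hxy : ‖x + y‖ = ‖x‖) : y = 0 := by
  have doubling : ∀ k : ℕ, ‖x + (2 ^ k : ℝ) • y‖ = ‖x‖ := fun k => by
    induction k with
    | zero => simpa using hxy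
    | succ k ih =>
      have hk : IsBirkhoffOrtho x ((2 ^ k : ℝ) • y) := by simpa using h.smul 1 (2 ^ k)
      simpa [smul_smul, pow_succ'] using hk.norm_add_two_smul_eq hX ih
  by_contra hy
  obtain ⟨k, hk⟩ := pow_unbounded_of_one_lt (2 * ‖x‖ / ‖y‖) (one_lt_two (α := ℝ))
  refine ((div_lt_iff₀ (norm_pos_iff.2 hy)).1 hk).not_ge ?_
  calc 2 ^ k * ‖y‖ = ‖x + (2 ^ k : ℝ) • y - x‖ := by
        rw [add_sub_cancel_left, norm_smul_of_nonneg (by positivity)]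
    _ ≤ ‖x + (2 ^ k : ℝ) • y‖ + ‖x‖ := norm_sub_le _ _
    _ = 2 * ‖x‖ := by rw [doubling, two_mul]

lemma eq_zero_of_isBirkhoffOrtho_add (hX : IsoscelesImpliesBirkhoff X) (h : IsBirkhoffOrtho x y)
    (h' : IsBirkhoffOrtho (x + y) y) : y = 0 :=
  h.eq_zero_of_norm_add_eq hX
    (le_antisymm (by simpa using h' (-1)) (by simpa using h 1))

lemma abs_eq_of_norm_add_smul_eq (hX : IsoscelesImpliesBirkhoff X) (h : IsBirkhoffOrtho x y)
    (hy : y ≠ 0) {s t : ℝ} (hst : ‖x + s • y‖ = ‖x + t • y‖) : |s| = |t| := by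
  obtain rfl | hne := eq_or_ne s t
  · rfl
  have midpoint_ortho : IsBirkhoffOrtho (x + ((s + t) / 2) • y) y := by
    rw [← isBirkhoffOrtho_smul_smul_iff two_ne_zero (sub_ne_zero.2 hne)]
    convert hX (isIsoscelesOrtho_add_sub hst) using 1 <;> module
  have hmid : ((s + t) / 2) • y = 0 :=
    eq_zero_of_isBirkhoffOrtho_add hX (by simpa using h.smul 1 ((s + t) / 2))
      (by simpa using midpoint_ortho.smul 1 ((s + t) / 2))
  have : (s + t) / 2 = 0 := (smul_eq_zero.1 hmid).resolve_right hy
  rw [show s = -t by linarith, abs_neg]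

lemma isIsoscelesOrtho (hX : IsoscelesImpliesBirkhoff X) (h : IsBirkhoffOrtho x y) :
    IsIsoscelesOrtho x y := by
  obtain rfl | hy := eq_or_ne y 0
  · simp [IsIsoscelesOrtho]
  obtain ⟨t, ht, hxt⟩ := exists_nonneg_norm_add_smul_eq (neg_ne_zero.2 hy)
    (show ‖x‖ ≤ ‖x + y‖ by simpa using h 1)
  have : |1| = |-t| := h.abs_eq_of_norm_add_smul_eq hX hy (by simpa using hxt.symm)
  rw [abs_one, abs_neg, abs_of_nonneg ht] at this
  rw [IsIsoscelesOrtho, ← hxt, ← this, one_smul, sub_eq_add_neg]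

lemma symm (hX : IsoscelesImpliesBirkhoff X) (h : IsBirkhoffOrtho x y) : IsBirkhoffOrtho y x :=
  hX (h.isIsoscelesOrtho hX).symm

end IsBirkhoffOrtho

namespace IsoscelesImpliesBirkhoff

variable {X : Type*} [NormedAddCommGroup X] [NormedSpace ℝ X]

lemma norm_smul_add_smul_comm (hX : IsoscelesImpliesBirkhoff X) {u v : X} (h : ‖u‖ = ‖v‖)
    (a b : ℝ) : ‖a • u + b • v‖ = ‖b • u + a • v‖ := by
  have hortho : IsBirkhoffOrtho (((a + b) / 2) • (u + v)) (((a - b) / 2) • (u - v)) :=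
    (hX (isIsoscelesOrtho_add_sub h)).smul _ _
  have hnorm : ‖_ + _‖ = ‖_ - _‖ := hortho.isIsoscelesOrtho hX
  convert hnorm using 2 <;> module

lemma norm_smul_add_smul_sq_of_norm_eq_one (hX : IsoscelesImpliesBirkhoff X) {e f : X}
    (he : ‖e‖ = 1) (hf : ‖f‖ = 1) (h : IsBirkhoffOrtho e f) {a b : ℝ} (ha : 0 ≤ a) (hb : 0 ≤ b) :
    ‖a • e + b • f‖ ^ 2 = a ^ 2 + b ^ 2 := by
  set n := ‖a • e + b • f‖
  have hn0 : 0 ≤ n := norm_nonneg _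
  have han : a ≤ n := by
    simpa [norm_smul_of_nonneg ha, he] using h.smul a b 1
  have ficken_with_sum : ‖(a * b) • f + (a ^ 2 - n ^ 2) • e‖ = n * b := by
    have hw : ‖n • e‖ = ‖a • e + b • f‖ := by rw [norm_smul_of_nonneg hn0, he, mul_one]
    calc ‖(a * b) • f + (a ^ 2 - n ^ 2) • e‖ = ‖(-n) • n • e + a • (a • e + b • f)‖ := by
          congr 1; module
      _ = ‖a • n • e + (-n) • (a • e + b • f)‖ := hX.norm_smul_add_smul_comm hw _ _
      _ = ‖(-(n * b)) • f‖ := by congr 1; module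
      _ = n * b := by rw [norm_smul, hf, norm_neg, Real.norm_of_nonneg (by positivity), mul_one]
  have ficken_with_unit : ‖(a * b) • f + b ^ 2 • e‖ = n * b := by
    calc ‖(a * b) • f + b ^ 2 • e‖ = ‖b • (b • e + a • f)‖ := by congr 1; module
      _ = b * ‖b • e + a • f‖ := norm_smul_of_nonneg hb _
      _ = n * b := by rw [hX.norm_smul_add_smul_comm (he.trans hf.symm), mul_comm]
  have hfe : IsBirkhoffOrtho ((a * b) • f) e := by simpa using (h.symm hX).smul (a * b) 1
  have he0 : e ≠ 0 := norm_ne_zero_iff.1 (he ▸ one_ne_zero)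
  have := hfe.abs_eq_of_norm_add_smul_eq hX he0 (ficken_with_sum.trans ficken_with_unit.symm)
  rw [abs_of_nonneg (sq_nonneg b), abs_of_nonpos (by nlinarith)] at this
  linarith

lemma norm_add_sq_of_isBirkhoffOrtho (hX : IsoscelesImpliesBirkhoff X) {x y : X}
    (h : IsBirkhoffOrtho x y) : ‖x + y‖ ^ 2 = ‖x‖ ^ 2 + ‖y‖ ^ 2 := by
  obtain rfl | hx := eq_or_ne x 0
  · simp
  obtain rfl | hy := eq_or_ne y 0
  · simp
  simpa [smul_smul, hx, hy] using
    hX.norm_smul_add_smul_sq_of_norm_eq_one (norm_smul_inv_norm (𝕜 := ℝ) hx)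
      (norm_smul_inv_norm (𝕜 := ℝ) hy) (h.smul _ _) (norm_nonneg x) (norm_nonneg y)

theorem parallelogramLaw (hX : IsoscelesImpliesBirkhoff X) : ParallelogramLaw X := by
  intro x z
  obtain ⟨m, hm⟩ := exists_isBirkhoffOrtho_sub_smul x z
  set w := z - m • x with hw
  have pythagoras (a b : ℝ) : ‖a • x + b • w‖ ^ 2 = a ^ 2 * ‖x‖ ^ 2 + b ^ 2 * ‖w‖ ^ 2 := by
    rw [hX.norm_add_sq_of_isBirkhoffOrtho ((hm.symm hX).smul a b), norm_smul, norm_smul, mul_pow,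
      mul_pow, Real.norm_eq_abs, Real.norm_eq_abs, sq_abs, sq_abs]
  rw [show x + z = (1 + m) • x + (1 : ℝ) • w by rw [hw]; module,
    show x - z = (1 - m) • x + (-1 : ℝ) • w by rw [hw]; module,
    show ‖z‖ = ‖m • x + (1 : ℝ) • w‖ by rw [hw]; congr 1; module,
    pythagoras, pythagoras, pythagoras]
  ring

end IsoscelesImpliesBirkhoff

section AngularDistance

lemma alphaD_sq_sub_betaD_sq {E : Type*} [NormedAddCommGroup E] [InnerProductSpace ℝ E]
    (p : ℝ) (x y : E) :
    alphaD p x y ^ 2 - betaD p x y ^ 2 =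
      ((‖x‖ ^ (p - 1)) ^ 2 - (‖y‖ ^ (p - 1)) ^ 2) * (‖x‖ ^ 2 - ‖y‖ ^ 2) := by
  simp only [alphaD, betaD, norm_sub_sq_real, norm_smul, inner_smul_left, inner_smul_right,
    mul_pow, Real.norm_eq_abs, sq_abs, conj_trivial]
  ring

lemma betaD_le_alphaD_of_innerProductSpace {E : Type*} [NormedAddCommGroup E]
    [InnerProductSpace ℝ E] {p : ℝ} (hp : 1 ≤ p) (x y : E) : betaD p x y ≤ alphaD p x y := by
  have hsq : MonotoneOn (fun t : ℝ => t ^ 2) (Ici 0) := fun _ hs _ _ hst =>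
    pow_le_pow_left₀ hs hst 2
  have hrpow : MonotoneOn (fun t : ℝ => (t ^ (p - 1)) ^ 2) (Ici 0) :=
    hsq.comp (Real.monotoneOn_rpow_Ici_of_exponent_nonneg (sub_nonneg.2 hp))
      fun _ ht => Real.rpow_nonneg ht _
  have hdiff : 0 ≤ alphaD p x y ^ 2 - betaD p x y ^ 2 := by
    rw [alphaD_sq_sub_betaD_sq]
    exact monovaryOn_iff_forall_mul_nonneg.1 (hrpow.monovaryOn hsq)
      (norm_nonneg y) (norm_nonneg x)
  exact le_of_sq_le_sq (sub_nonneg.1 hdiff) (norm_nonneg _)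

variable {X : Type*} [NormedAddCommGroup X] [NormedSpace ℝ X]

lemma ParallelogramLaw.betaD_le_alphaD (hX : ParallelogramLaw X) {p : ℝ} (hp : 1 ≤ p) (x y : X) :
    betaD p x y ≤ alphaD p x y :=
  letI := InnerProductSpace.ofNorm ℝ fun x y : X => by linear_combination hX x y
  betaD_le_alphaD_of_innerProductSpace hp x y

lemma rpow_norm_exp_smul (t q : ℝ) (u : X) :
    ‖Real.exp t • u‖ ^ q = ‖u‖ ^ q * Real.exp (t * q) := by
  rw [norm_smul_of_nonneg (Real.exp_nonneg t), Real.mul_rpow (Real.exp_nonneg t) (norm_nonneg u),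
    ← Real.exp_mul, mul_comm]

lemma alphaD_exp_smul {u v : X} (huv : ‖u‖ = ‖v‖) (p t : ℝ) :
    alphaD p (Real.exp t • u) (Real.exp (-t) • v) =
      ‖u‖ ^ (p - 1) * ‖Real.exp (p * t) • u - Real.exp (-(p * t)) • v‖ := by
  rw [alphaD, rpow_norm_exp_smul, rpow_norm_exp_smul, ← huv, mul_smul, mul_smul, ← smul_sub,
    norm_smul_of_nonneg (by positivity), smul_smul, smul_smul, ← Real.exp_add, ← Real.exp_add]
  ring_nf

lemma betaD_exp_smul {u v : X} (huv : ‖u‖ = ‖v‖) (p t : ℝ) :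
    betaD p (Real.exp t • u) (Real.exp (-t) • v) =
      ‖u‖ ^ (p - 1) * ‖Real.exp ((2 - p) * t) • u - Real.exp (-((2 - p) * t)) • v‖ := by
  rw [betaD, rpow_norm_exp_smul, rpow_norm_exp_smul, ← huv, mul_smul, mul_smul, ← smul_sub,
    norm_smul_of_nonneg (by positivity), smul_smul, smul_smul, ← Real.exp_add, ← Real.exp_add]
  ring_nf

lemma norm_sub_le_norm_exp_smul_sub_exp_neg_smul {p : ℝ} (hp : 1 < p)
    (h : ∀ x y : X, x ≠ 0 → y ≠ 0 → betaD p x y ≤ alphaD p x y) {u v : X} (huv : ‖u‖ = ‖v‖)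
    (t : ℝ) : ‖u - v‖ ≤ ‖Real.exp t • u - Real.exp (-t) • v‖ := by
  obtain rfl | hu := eq_or_ne u 0
  · simp [norm_eq_zero.1 (huv.symm.trans norm_zero)]
  have hv : v ≠ 0 := norm_ne_zero_iff.1 (huv ▸ norm_ne_zero_iff.2 hu)
  let F : ℝ → ℝ := fun s => ‖Real.exp s • u - Real.exp (-s) • v‖
  have compare (s : ℝ) : F ((2 - p) * s) ≤ F (p * s) := by
    have := h _ _ (smul_ne_zero (Real.exp_ne_zero s) hu) (smul_ne_zero (Real.exp_ne_zero (-s)) hv)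
    rw [alphaD_exp_smul huv, betaD_exp_smul huv] at this
    exact le_of_mul_le_mul_left this (Real.rpow_pos_of_pos (norm_pos_iff.2 hu) _)
  have hp0 : 0 < p := zero_lt_one.trans hp
  have ratio_lt : |(2 - p) / p| < 1 := by
    rw [abs_div, abs_of_pos hp0, div_lt_one hp0, abs_lt]
    constructor <;> linarith
  have contract (s : ℝ) : F (((2 - p) / p) • s) ≤ F s := by
    convert compare (s / p) using 2
    · rw [smul_eq_mul]; ring
    · field_simp
  have hF : Continuous F := by fun_prop
  simpa [F] using apply_zero_le_of_apply_smul_le hF.continuousAt ratio_lt contract t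

lemma isoscelesImpliesBirkhoff_of_betaD_le_alphaD {p : ℝ} (hp : 1 < p)
    (h : ∀ x y : X, x ≠ 0 → y ≠ 0 → betaD p x y ≤ alphaD p x y) : IsoscelesImpliesBirkhoff X := by
  intro x y hxy
  refine isBirkhoffOrtho_of_norm_le_cosh_smul_add_sinh_smul fun t => ?_
  have hnorm : ‖x + y‖ = ‖y - x‖ := hxy.trans (norm_sub_rev x y)
  have key := norm_sub_le_norm_exp_smul_sub_exp_neg_smul hp h hnorm t
  have hleft : x + y - (y - x) = (2 : ℝ) • x := by module
  have hright : Real.exp t • (x + y) - Real.exp (-t) • (y - x) =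
      (2 : ℝ) • (Real.cosh t • x + Real.sinh t • y) := by
    rw [Real.cosh_eq, Real.sinh_eq]; module
  rw [hleft, hright, norm_smul, norm_smul] at key
  exact le_of_mul_le_mul_left key (by simp)

theorem parallelogramLaw_iff_betaD_le_alphaD {p : ℝ} (hp : 1 < p) :
    ParallelogramLaw X ↔ ∀ x y : X, x ≠ 0 → y ≠ 0 → betaD p x y ≤ alphaD p x y :=
  ⟨fun hX x y _ _ => hX.betaD_le_alphaD hp.le x y,
    fun h => (isoscelesImpliesBirkhoff_of_betaD_le_alphaD hp h).parallelogramLaw⟩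

lemma betaD_eq_mul_alphaD_two_sub (p : ℝ) {x y : X} (hx : x ≠ 0) (hy : y ≠ 0) :
    betaD p x y = (‖x‖ * ‖y‖) ^ (p - 1) * alphaD (2 - p) x y := by
  have cancel {z : X} (hz : z ≠ 0) : ‖z‖ ^ (p - 1) * ‖z‖ ^ (2 - p - 1) = 1 := by
    rw [← Real.rpow_add (norm_pos_iff.2 hz), show p - 1 + (2 - p - 1) = 0 by ring, Real.rpow_zero]
  rw [alphaD, ← norm_smul_of_nonneg (by positivity), smul_sub, smul_smul, smul_smul,
    Real.mul_rpow (norm_nonneg x) (norm_nonneg y), mul_right_comm, cancel hx, one_mul, mul_assoc,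
    cancel hy, mul_one, betaD]

lemma alphaD_le_betaD_iff_two_sub (p : ℝ) {x y : X} (hx : x ≠ 0) (hy : y ≠ 0) :
    alphaD p x y ≤ betaD p x y ↔ betaD (2 - p) x y ≤ alphaD (2 - p) x y := by
  have hpos : 0 < (‖x‖ * ‖y‖) ^ (p - 1) := by positivity
  rw [betaD_eq_mul_alphaD_two_sub p hx hy, betaD_eq_mul_alphaD_two_sub (2 - p) hx hy,
    sub_sub_cancel, show 2 - p - 1 = -(p - 1) by ring, Real.rpow_neg (by positivity),
    inv_mul_le_iff₀ hpos]

end AngularDistance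

theorem stmt_18 {X : Type*} [NormedAddCommGroup X] [NormedSpace ℝ X] (p : ℝ) :
    (1 < p →
      (ParallelogramLaw X ↔
        ∀ x y : X, x ≠ 0 → y ≠ 0 → betaD p x y ≤ alphaD p x y)) ∧
    (p < 1 →
      (ParallelogramLaw X ↔
        ∀ x y : X, x ≠ 0 → y ≠ 0 → alphaD p x y ≤ betaD p x y)) := by
  refine ⟨parallelogramLaw_iff_betaD_le_alphaD, fun hp => ?_⟩
  rw [parallelogramLaw_iff_betaD_le_alphaD (show 1 < 2 - p by linarith)]
  refine forall₄_congr fun x y hx hy => ?_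
  exact (alphaD_le_betaD_iff_two_sub p hx hy).symm
end

section
/- Let X be a real normed linear space and let p be a real number with p ≠ 1. Then the norm of X satisfies the parallelogram law (equivalently, X is an inner product space) if and only if for all nonzero x, y ∈ X, α_p[x,y] = √( (‖x‖^(p+1) − ‖y‖^(p+1))(‖x‖^(p−1) − ‖y‖^(p−1)) + ‖x‖^(p−1)‖y‖^(p−1)‖x − y‖² ). -/
/-!
Write `cos(x, y) = (‖x‖² + ‖y‖² - ‖x - y‖²) / (2 ‖x‖ ‖y‖)`. The angular distance formula for `x`
and `y` says exactly that this cosine does not change when `x` and `y` are replaced by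
`‖x‖ ^ (p - 1) • x` and `‖y‖ ^ (p - 1) • y`, which is clear in an inner product space. Conversely,
if `‖x‖ = ‖y‖`, the formula makes `f t = cos(t • x, y)` invariant under `t ↦ t ^ p`. For `|p| ≠ 1`,
iterating this map or its inverse pulls `t` to the fixed point `1`, so `f` is constant; for `p = -1`
the map is `t ↦ t⁻¹`. Either way `f t⁻¹ = f t`, that is, `‖t • x - y‖ = ‖x - t • y‖`, which yields
Ficken's condition: interchanging two vectors of equal norm is an isometry of their span. These
isometries force Pythagoras' theorem.
-/

open Filter Topology

section RpowInvariant

variable {Y : Type*} [TopologicalSpace Y] [T2Space Y] {f : ℝ → Y} {p t : ℝ}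

theorem eq_apply_one_of_apply_rpow_eq_of_abs_lt_one (hf : ContinuousAt f 1) (hp : |p| < 1)
    (h : ∀ t, 0 < t → f (t ^ p) = f t) (ht : 0 < t) : f t = f 1 := by
  have apply_iterate (n : ℕ) : f (t ^ p ^ n) = f t := by
    induction n with
    | zero => simp
    | succ n ih => rw [pow_succ, Real.rpow_mul ht.le, h _ (Real.rpow_pos_of_pos ht _), ih]
  have tendsto_iterate : Tendsto (fun n : ℕ ↦ t ^ p ^ n) atTop (𝓝 1) := by
    simpa [Function.comp_def] using (Real.continuousAt_const_rpow ht.ne').tendsto.comp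
      (tendsto_pow_atTop_nhds_zero_of_abs_lt_one hp)
  have tendsto_apply := hf.tendsto.comp tendsto_iterate
  simp only [Function.comp_def, apply_iterate] at tendsto_apply
  exact tendsto_nhds_unique tendsto_const_nhds tendsto_apply

theorem eq_apply_one_of_apply_rpow_eq (hf : ContinuousAt f 1) (hp : |p| ≠ 1)
    (h : ∀ t, 0 < t → f (t ^ p) = f t) (ht : 0 < t) : f t = f 1 := by
  rcases hp.lt_or_gt with hp | hp
  · exact eq_apply_one_of_apply_rpow_eq_of_abs_lt_one hf hp h ht
  · have hp₀ : p ≠ 0 := abs_pos.mp (one_pos.trans hp)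
    have h_inv (s : ℝ) (hs : 0 < s) : f (s ^ p⁻¹) = f s := by
      rw [← h _ (Real.rpow_pos_of_pos hs _), Real.rpow_inv_rpow hs.le hp₀]
    exact eq_apply_one_of_apply_rpow_eq_of_abs_lt_one hf
      (by rw [abs_inv]; exact inv_lt_one_of_one_lt₀ hp) h_inv ht

theorem apply_inv_eq_of_apply_rpow_eq (hf : ContinuousAt f 1) (hp : p ≠ 1)
    (h : ∀ t, 0 < t → f (t ^ p) = f t) (ht : 0 < t) : f t⁻¹ = f t := by
  rcases eq_or_ne p (-1) with rfl | hp'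
  · rw [← Real.rpow_neg_one, h t ht]
  · have hp_abs : |p| ≠ 1 := by simp [abs_eq, hp, hp']
    rw [eq_apply_one_of_apply_rpow_eq hf hp_abs h ht,
      eq_apply_one_of_apply_rpow_eq hf hp_abs h (inv_pos.mpr ht)]

end RpowInvariant

/-- The cosine of the angle between `x` and `y` read off from the law of cosines, which makes sense
in any normed space. It is `0` if `x = 0` or `y = 0`. -/
noncomputable def normCosine {X : Type*} [NormedAddCommGroup X] (x y : X) : ℝ :=
  (‖x‖ ^ 2 + ‖y‖ ^ 2 - ‖x - y‖ ^ 2) / (2 * ‖x‖ * ‖y‖)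

/-- Roberts orthogonality: the reflection `y ↦ -y` that fixes `x` is an isometry of the span of `x`
and `y`. -/
def RobertsOrthogonal {X : Type*} [NormedAddCommGroup X] [NormedSpace ℝ X] (x y : X) : Prop :=
  ∀ t : ℝ, ‖x + t • y‖ = ‖x - t • y‖

/-- Ficken's condition: interchanging two vectors of equal norm is an isometry of their span. -/
def FickenCondition (X : Type*) [NormedAddCommGroup X] [NormedSpace ℝ X] : Prop :=
  ∀ x y : X, ‖x‖ = ‖y‖ → ∀ a b : ℝ, ‖a • x + b • y‖ = ‖b • x + a • y‖

section Normed

variable {X : Type*} [NormedAddCommGroup X]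

theorem norm_sub_sq_eq_normCosine {x y : X} (hx : x ≠ 0) (hy : y ≠ 0) :
    ‖x - y‖ ^ 2 = ‖x‖ ^ 2 + ‖y‖ ^ 2 - 2 * ‖x‖ * ‖y‖ * normCosine x y := by
  unfold normCosine
  field_simp
  ring

theorem normCosine_le_one (x y : X) : normCosine x y ≤ 1 := by
  refine div_le_one_of_le₀ ?_ (by positivity)
  have reverse_triangle : (‖x‖ - ‖y‖) ^ 2 ≤ ‖x - y‖ ^ 2 :=
    sq_le_sq.mpr ((abs_norm_sub_norm_le x y).trans (le_abs_self _))
  linarith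

theorem normCosine_eq_cos_angle [InnerProductSpace ℝ X] (x y : X) :
    normCosine x y = Real.cos (InnerProductGeometry.angle x y) := by
  rw [normCosine, InnerProductGeometry.cos_angle,
    real_inner_eq_norm_mul_self_add_norm_mul_self_sub_norm_sub_mul_self_div_two, div_div]
  ring

variable [NormedSpace ℝ X]

theorem normCosine_smul_smul {c : ℝ} (hc : c ≠ 0) (x y : X) :
    normCosine (c • x) (c • y) = normCosine x y := by
  have hc' : ‖c‖ ^ 2 ≠ 0 := by positivity
  rw [normCosine, normCosine, ← smul_sub, norm_smul, norm_smul, norm_smul,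
    ← mul_div_mul_left _ (2 * ‖x‖ * ‖y‖) hc']
  ring

theorem continuousAt_normCosine_smul_left {x y : X} (hx : x ≠ 0) (hy : y ≠ 0) {t : ℝ}
    (ht : t ≠ 0) : ContinuousAt (fun s : ℝ ↦ normCosine (s • x) y) t := by
  unfold normCosine
  exact ContinuousAt.div (by fun_prop) (by fun_prop) (by simp [norm_smul, hx, hy, ht])

theorem ParallelogramLaw.normCosine_smul_smul_of_pos (h : ParallelogramLaw X) (x y : X) {a b : ℝ}
    (ha : 0 < a) (hb : 0 < b) : normCosine (a • x) (b • y) = normCosine x y := by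
  let _ : InnerProductSpace ℝ X := InnerProductSpace.ofNorm ℝ fun x y ↦ by
    linarith [h x y]
  rw [normCosine_eq_cos_angle, normCosine_eq_cos_angle,
    InnerProductGeometry.angle_smul_left_of_pos _ _ ha,
    InnerProductGeometry.angle_smul_right_of_pos _ _ hb]

theorem norm_smul_sub_smul_eq_sqrt_iff {x y : X} (hx : x ≠ 0) (hy : y ≠ 0) {a b : ℝ}
    (ha : 0 < a) (hb : 0 < b) :
    ‖a • x - b • y‖ =
        √((a * ‖x‖ ^ 2 - b * ‖y‖ ^ 2) * (a - b) + a * b * ‖x - y‖ ^ 2) ↔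
      normCosine (a • x) (b • y) = normCosine x y := by
  have radicand_eq : (a * ‖x‖ ^ 2 - b * ‖y‖ ^ 2) * (a - b) + a * b * ‖x - y‖ ^ 2 =
      (a * ‖x‖) ^ 2 + (b * ‖y‖) ^ 2 - 2 * (a * ‖x‖) * (b * ‖y‖) * normCosine x y := by
    rw [norm_sub_sq_eq_normCosine hx hy]
    ring
  have norm_sub_sq : ‖a • x - b • y‖ ^ 2 = (a * ‖x‖) ^ 2 + (b * ‖y‖) ^ 2 -
      2 * (a * ‖x‖) * (b * ‖y‖) * normCosine (a • x) (b • y) := by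
    rw [norm_sub_sq_eq_normCosine (smul_ne_zero ha.ne' hx) (smul_ne_zero hb.ne' hy),
      norm_smul_of_nonneg ha.le, norm_smul_of_nonneg hb.le]
  have radicand_nonneg : 0 ≤ (a * ‖x‖) ^ 2 + (b * ‖y‖) ^ 2 -
      2 * (a * ‖x‖) * (b * ‖y‖) * normCosine x y := by
    have := mul_le_of_le_one_right (by positivity : 0 ≤ 2 * (a * ‖x‖) * (b * ‖y‖))
      (normCosine_le_one x y)
    linarith [sq_nonneg (a * ‖x‖ - b * ‖y‖)]
  have hcoeff : 2 * (a * ‖x‖) * (b * ‖y‖) ≠ 0 := by positivity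
  rw [radicand_eq, eq_comm, Real.sqrt_eq_iff_eq_sq radicand_nonneg (norm_nonneg _), norm_sub_sq,
    sub_right_inj, mul_right_inj' hcoeff, eq_comm]

theorem alphaD_eq_sqrt_iff (p : ℝ) {x y : X} (hx : x ≠ 0) (hy : y ≠ 0) :
    alphaD p x y =
        √((‖x‖ ^ (p + 1) - ‖y‖ ^ (p + 1)) * (‖x‖ ^ (p - 1) - ‖y‖ ^ (p - 1)) +
          ‖x‖ ^ (p - 1) * ‖y‖ ^ (p - 1) * ‖x - y‖ ^ 2) ↔
      normCosine (‖x‖ ^ (p - 1) • x) (‖y‖ ^ (p - 1) • y) = normCosine x y := by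
  have rpow_add_one_eq {r : ℝ} (hr : 0 < r) : r ^ (p + 1) = r ^ (p - 1) * r ^ 2 := by
    rw [← Real.rpow_add_natCast hr.ne']
    congr 1
    push_cast
    ring
  have hx' := norm_pos_iff.mpr hx
  have hy' := norm_pos_iff.mpr hy
  rw [rpow_add_one_eq hx', rpow_add_one_eq hy']
  exact norm_smul_sub_smul_eq_sqrt_iff hx hy (Real.rpow_pos_of_pos hx' _)
    (Real.rpow_pos_of_pos hy' _)

namespace RobertsOrthogonal

variable {x y : X}

theorem smul_right (h : RobertsOrthogonal x y) (c : ℝ) : RobertsOrthogonal x (c • y) :=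
  fun t ↦ by simpa only [smul_smul] using h (t * c)

theorem symm (h : RobertsOrthogonal x y) : RobertsOrthogonal y x := by
  intro t
  rcases eq_or_ne t 0 with rfl | ht
  · simp
  · have := congrArg (‖t‖ * ·) (h t⁻¹)
    simp only [← norm_smul, smul_add, smul_sub, smul_inv_smul₀ ht] at this
    rw [add_comm, this, norm_sub_rev]

theorem smul_left (h : RobertsOrthogonal x y) (c : ℝ) : RobertsOrthogonal (c • x) y :=
  (h.symm.smul_right c).symm

theorem norm_add_eq_norm_sub (h : RobertsOrthogonal x y) : ‖x + y‖ = ‖x - y‖ := by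
  simpa using h 1

theorem norm_le_norm_add (h : RobertsOrthogonal x y) : ‖x‖ ≤ ‖x + y‖ := by
  have two_smul_eq : (2 : ℝ) • x = (x + y) + (x - y) := by module
  have triangle := norm_add_le (x + y) (x - y)
  rw [← two_smul_eq, norm_smul_of_nonneg zero_le_two, ← h.norm_add_eq_norm_sub] at triangle
  linarith

/-- The reflections attached to the two orthogonality relations compose to a shear of the plane,
and the orbits of an isometry are bounded. -/
theorem smul_eq_zero_of_smul_add {c : ℝ} (h : RobertsOrthogonal x y)
    (h' : RobertsOrthogonal x (c • x + y)) : c • x = 0 := by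
  have periodic : Function.Periodic (fun s : ℝ ↦ ‖s • x - y‖) (2 * c) := fun s ↦ calc
    ‖(s + 2 * c) • x - y‖ = ‖(s + 2 * c) • x + y‖ := ((h.smul_left _).norm_add_eq_norm_sub).symm
    _ = ‖(s + c) • x + (c • x + y)‖ := by congr 1; module
    _ = ‖(s + c) • x - (c • x + y)‖ := (h'.smul_left _).norm_add_eq_norm_sub
    _ = ‖s • x - y‖ := by congr 1; module
  have nsmul_norm_le (n : ℕ) : n • ‖(2 * c) • x‖ ≤ 2 * ‖y‖ := calc
    n • ‖(2 * c) • x‖ = ‖(n * (2 * c)) • x‖ := by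
      rw [mul_smul (n : ℝ), norm_smul_of_nonneg n.cast_nonneg, nsmul_eq_mul]
    _ ≤ ‖(n * (2 * c)) • x - y‖ + ‖y‖ := norm_le_norm_sub_add _ _
    _ = 2 * ‖y‖ := by
      have norm_eq : ‖(n * (2 * c)) • x - y‖ = ‖y‖ := by simpa using periodic.nat_mul_eq n
      rw [norm_eq, two_mul]
  by_contra hcx
  have norm_pos : 0 < ‖(2 * c) • x‖ := by
    rw [mul_smul]
    exact norm_pos_iff.mpr (smul_ne_zero two_ne_zero hcx)
  obtain ⟨n, hn⟩ := exists_lt_nsmul norm_pos (2 * ‖y‖)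
  exact (nsmul_norm_le n).not_gt hn

end RobertsOrthogonal

namespace FickenCondition

variable {x y : X}

theorem of_norm_smul_sub_eq
    (h : ∀ x y : X, ‖x‖ = ‖y‖ → ∀ t : ℝ, 0 < t → ‖t • x - y‖ = ‖x - t • y‖) :
    FickenCondition X := by
  intro x y hxy a b
  have norm_smul_add (t : ℝ) : ‖t • x + y‖ = ‖x + t • y‖ := by
    rcases lt_trichotomy t 0 with ht | rfl | ht
    · calc
        ‖t • x + y‖ = ‖(-t) • x - y‖ := by rw [← norm_neg]; congr 1; module
        _ = ‖x - (-t) • y‖ := h x y hxy (-t) (neg_pos.mpr ht)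
        _ = ‖x + t • y‖ := by congr 1; module
    · simp [hxy]
    · simpa using h x (-y) (by rwa [norm_neg]) t ht
  rcases eq_or_ne b 0 with rfl | hb
  · simp [norm_smul, hxy]
  · have := congrArg (‖b‖ * ·) (norm_smul_add (a / b))
    simpa only [← norm_smul, smul_add, smul_smul, mul_div_cancel₀ a hb] using this

theorem robertsOrthogonal_of_norm_add_eq_norm_sub (hX : FickenCondition X)
    (h : ‖x + y‖ = ‖x - y‖) : RobertsOrthogonal x y := by
  intro t
  convert hX _ _ h ((1 + t) / 2) ((1 - t) / 2) using 2 <;> module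

theorem robertsOrthogonal_add_sub (hX : FickenCondition X) (h : ‖x‖ = ‖y‖) :
    RobertsOrthogonal (x + y) (x - y) := by
  apply hX.robertsOrthogonal_of_norm_add_eq_norm_sub
  convert congrArg (2 * ·) h using 1 <;>
    rw [← norm_smul_of_nonneg zero_le_two] <;> congr 1 <;> module

/-- In the Euclidean plane, the second vector is a multiple of `x + y` turned by a right angle. -/
theorem robertsOrthogonal_add_of_rotation (hX : FickenCondition X) (h : RobertsOrthogonal x y)
    (hx : x ≠ 0) (hy : y ≠ 0) :
    RobertsOrthogonal (x + y) ((-‖y‖ ^ 2) • x + ‖x‖ ^ 2 • y) := by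
  set a := ‖x‖
  set b := ‖y‖
  have hab : a * b ≠ 0 := mul_ne_zero (norm_ne_zero_iff.mpr hx) (norm_ne_zero_iff.mpr hy)
  have norm_smul_eq : ‖b • x‖ = ‖a • y‖ := by
    rw [norm_smul_of_nonneg (norm_nonneg y), norm_smul_of_nonneg (norm_nonneg x), mul_comm]
  have isosceles : ‖(a * b) • (x + y) + ((-b ^ 2) • x + a ^ 2 • y)‖ =
      ‖(a * b) • (x + y) - ((-b ^ 2) • x + a ^ 2 • y)‖ := calc
    _ = ‖(a - b) • b • x + (a + b) • a • y‖ := by congr 1; module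
    _ = ‖(a + b) • b • x + (a - b) • a • y‖ := hX _ _ norm_smul_eq _ _
    _ = ‖((a + b) * b) • x + ((a - b) * a) • y‖ := by simp only [smul_smul]
    _ = ‖((a + b) * b) • x - ((a - b) * a) • y‖ := h.smul_left _ _
    _ = _ := by congr 1; module
  simpa only [inv_smul_smul₀ hab] using
    (hX.robertsOrthogonal_of_norm_add_eq_norm_sub isosceles).smul_left (a * b)⁻¹

/-- Up to a factor, the second vector is the image of `y` under the isometry of the plane that
interchanges the directions of `x` and `x + y`. -/
theorem robertsOrthogonal_add_of_reflection (hX : FickenCondition X) (h : RobertsOrthogonal x y)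
    (hx : x ≠ 0) :
    RobertsOrthogonal (x + y) (‖x + y‖ ^ 2 • x - ‖x‖ ^ 2 • (x + y)) := by
  set a := ‖x‖
  set u := x + y
  set r := ‖u‖
  have ha₀ : a ^ 2 ≠ 0 := pow_ne_zero 2 (norm_ne_zero_iff.mpr hx)
  have norm_smul_eq : ‖r • x‖ = ‖a • u‖ := by
    rw [norm_smul_of_nonneg (norm_nonneg u), norm_smul_of_nonneg (norm_nonneg x), mul_comm]
  have norm_swap (s t : ℝ) : ‖(s * r) • x + (t * a) • u‖ = ‖(t * r) • x + (s * a) • u‖ := by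
    simpa only [smul_smul] using hX _ _ norm_smul_eq s t
  have isosceles : ‖a ^ 2 • u + (r ^ 2 • x - a ^ 2 • u)‖ =
      ‖a ^ 2 • u - (r ^ 2 • x - a ^ 2 • u)‖ := calc
    _ = ‖(r * r) • x + (0 * a) • u‖ := by congr 1; module
    _ = ‖(0 * r) • x + (r * a) • u‖ := norm_swap r 0
    _ = ‖(r * a) • (x + y)‖ := by congr 1; module
    _ = ‖(r * a) • (x - y)‖ := by rw [norm_smul, norm_smul, h.norm_add_eq_norm_sub]
    _ = ‖((2 * a) * r) • x + ((-r) * a) • u‖ := by congr 1; module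
    _ = ‖((-r) * r) • x + ((2 * a) * a) • u‖ := norm_swap (2 * a) (-r)
    _ = _ := by congr 1; module
  have orthogonal :=
    (hX.robertsOrthogonal_of_norm_add_eq_norm_sub isosceles).smul_left (a ^ 2)⁻¹
  rwa [inv_smul_smul₀ ha₀] at orthogonal

theorem norm_add_sq_of_robertsOrthogonal (hX : FickenCondition X) (h : RobertsOrthogonal x y) :
    ‖x + y‖ ^ 2 = ‖x‖ ^ 2 + ‖y‖ ^ 2 := by
  rcases eq_or_ne x 0 with rfl | hx
  · simp
  rcases eq_or_ne y 0 with rfl | hy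
  · simp
  have hx' : 0 < ‖x‖ := norm_pos_iff.mpr hx
  have hxy : x + y ≠ 0 := norm_pos_iff.mp (hx'.trans_le h.norm_le_norm_add)
  have rotation := hX.robertsOrthogonal_add_of_rotation h hx hy
  have reflection := (hX.robertsOrthogonal_add_of_reflection h hx).smul_right (‖x‖ ^ 2 + ‖y‖ ^ 2)
  generalize ‖x + y‖ ^ 2 = c at *
  have decomposition : (‖x‖ ^ 2 + ‖y‖ ^ 2) • (c • x - ‖x‖ ^ 2 • (x + y)) =
      (‖x‖ ^ 2 * (c - (‖x‖ ^ 2 + ‖y‖ ^ 2))) • (x + y) +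
        (-c) • ((-‖y‖ ^ 2) • x + ‖x‖ ^ 2 • y) := by
    module
  rw [decomposition] at reflection
  have coeff_eq_zero := (smul_eq_zero.mp
    ((rotation.smul_right (-c)).smul_eq_zero_of_smul_add reflection)).resolve_right hxy
  exact sub_eq_zero.mp ((mul_eq_zero.mp coeff_eq_zero).resolve_left (by positivity))

theorem parallelogramLaw (hX : FickenCondition X) : ParallelogramLaw X := by
  intro x y
  rcases eq_or_ne x 0 with rfl | hx
  · simp [two_mul]
  rcases eq_or_ne y 0 with rfl | hy
  · simp [two_mul]
  have hx' : 0 < ‖x‖ := norm_pos_iff.mpr hx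
  have hy' : 0 < ‖y‖ := norm_pos_iff.mpr hy
  set a := ‖x‖
  set b := ‖y‖
  set e := b • x + a • y
  set f := b • x - a • y
  have orthogonal : RobertsOrthogonal e f := hX.robertsOrthogonal_add_sub (by
    rw [norm_smul_of_nonneg hy'.le, norm_smul_of_nonneg hx'.le, mul_comm])
  have pythagoras (s t : ℝ) : ‖s • e + t • f‖ ^ 2 = s ^ 2 * ‖e‖ ^ 2 + t ^ 2 * ‖f‖ ^ 2 := by
    rw [hX.norm_add_sq_of_robertsOrthogonal ((orthogonal.smul_left s).smul_right t),
      norm_smul, norm_smul, mul_pow, mul_pow, Real.norm_eq_abs, Real.norm_eq_abs, sq_abs, sq_abs]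
  have norm_smul_sq (z : X) : ‖(2 * a * b) • z‖ ^ 2 = (2 * a * b) ^ 2 * ‖z‖ ^ 2 := by
    rw [norm_smul_of_nonneg (by positivity), mul_pow]
  have norm_x := pythagoras a a
  have norm_add := pythagoras (a + b) (a - b)
  have norm_sub := pythagoras (a - b) (a + b)
  rw [show a • e + a • f = (2 * a * b) • x by module, norm_smul_sq] at norm_x
  rw [show (a + b) • e + (a - b) • f = (2 * a * b) • (x + y) by module, norm_smul_sq] at norm_add
  rw [show (a - b) • e + (a + b) • f = (2 * a * b) • (x - y) by module, norm_smul_sq] at norm_sub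
  have norm_add_norm : ‖e‖ ^ 2 + ‖f‖ ^ 2 = (2 * a * b) ^ 2 := by
    refine mul_left_cancel₀ (pow_ne_zero 2 hx'.ne') ?_
    linear_combination -norm_x
  refine mul_left_cancel₀ (pow_ne_zero 2 (by positivity : 2 * a * b ≠ 0)) ?_
  linear_combination norm_add + norm_sub + (2 * a ^ 2 + 2 * b ^ 2) * norm_add_norm

end FickenCondition

theorem normCosine_rpow_smul_left_of_norm_eq {p : ℝ}
    (h : ∀ x y : X, x ≠ 0 → y ≠ 0 →
      normCosine (‖x‖ ^ (p - 1) • x) (‖y‖ ^ (p - 1) • y) = normCosine x y)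
    {x y : X} (hx : x ≠ 0) (hxy : ‖x‖ = ‖y‖) {t : ℝ} (ht : 0 < t) :
    normCosine (t ^ p • x) y = normCosine (t • x) y := by
  have hy : y ≠ 0 := norm_ne_zero_iff.mp (hxy ▸ norm_ne_zero_iff.mpr hx)
  have hc : ‖y‖ ^ (p - 1) ≠ 0 := (Real.rpow_pos_of_pos (norm_pos_iff.mpr hy) _).ne'
  have smul_eq : ‖t • x‖ ^ (p - 1) • t • x = ‖y‖ ^ (p - 1) • t ^ p • x := by
    have rpow_eq : t ^ p = t ^ (p - 1) * t := by
      rw [← Real.rpow_add_one ht.ne', sub_add_cancel]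
    rw [norm_smul_of_nonneg ht.le, Real.mul_rpow ht.le (norm_nonneg x), hxy, rpow_eq]
    module
  rw [← normCosine_smul_smul hc, ← smul_eq, h _ _ (smul_ne_zero ht.ne' hx) hy]

theorem fickenCondition_of_normCosine_rpow_smul {p : ℝ} (hp : p ≠ 1)
    (h : ∀ x y : X, x ≠ 0 → y ≠ 0 →
      normCosine (‖x‖ ^ (p - 1) • x) (‖y‖ ^ (p - 1) • y) = normCosine x y) :
    FickenCondition X := by
  refine FickenCondition.of_norm_smul_sub_eq fun x y hxy t ht ↦ ?_
  rcases eq_or_ne x 0 with rfl | hx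
  · obtain rfl : y = 0 := by simpa [eq_comm] using hxy
    simp
  have hy : y ≠ 0 := norm_ne_zero_iff.mp (hxy ▸ norm_ne_zero_iff.mpr hx)
  have normCosine_eq : normCosine x (t • y) = normCosine (t • x) y := calc
    normCosine x (t • y) = normCosine (t⁻¹ • x) y := by
      rw [← normCosine_smul_smul (inv_ne_zero ht.ne'), inv_smul_smul₀ ht.ne']
    _ = normCosine (t • x) y :=
      apply_inv_eq_of_apply_rpow_eq (continuousAt_normCosine_smul_left hx hy one_ne_zero) hp
        (fun s hs ↦ normCosine_rpow_smul_left_of_norm_eq h hx hxy hs) ht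
  rw [← sq_eq_sq₀ (norm_nonneg _) (norm_nonneg _),
    norm_sub_sq_eq_normCosine (smul_ne_zero ht.ne' hx) hy,
    norm_sub_sq_eq_normCosine hx (smul_ne_zero ht.ne' hy), normCosine_eq,
    norm_smul_of_nonneg ht.le, norm_smul_of_nonneg ht.le, hxy]
  ring

end Normed

theorem stmt_19 {X : Type*} [NormedAddCommGroup X] [NormedSpace ℝ X]
    (p : ℝ) (hp : p ≠ 1) :
    ParallelogramLaw X ↔
      ∀ x y : X, x ≠ 0 → y ≠ 0 →
        alphaD p x y =
          Real.sqrt ((‖x‖ ^ (p + 1) - ‖y‖ ^ (p + 1)) * (‖x‖ ^ (p - 1) - ‖y‖ ^ (p - 1)) +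
            ‖x‖ ^ (p - 1) * ‖y‖ ^ (p - 1) * ‖x - y‖ ^ 2) := by
  refine ⟨fun h x y hx hy ↦ ?_, fun h ↦ ?_⟩
  · exact (alphaD_eq_sqrt_iff p hx hy).mpr (h.normCosine_smul_smul_of_pos x y
      (Real.rpow_pos_of_pos (norm_pos_iff.mpr hx) _) (Real.rpow_pos_of_pos (norm_pos_iff.mpr hy) _))
  · exact (fickenCondition_of_normCosine_rpow_smul hp fun x y hx hy ↦
      (alphaD_eq_sqrt_iff p hx hy).mp (h x y hx hy)).parallelogramLaw
end
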